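/- arXiv:0801.3714 — 2 statements merged into one kernel-verified Lean document; each statement's English description precedes it below -/
import Mathlib

section
/- Let G be a connected bridgeless cubic graph in which every 2-factor consists only of 5-cycles. If u,v,w,x are vertices of G with (u,v),(v,w),(w,x) edges of G (a path of length three), then there is a perfect matching of G containing both edges (u,v) and (w,x). -/
/-! Multigraphs: vertex type `V`, edge type `E`, incidence map `ends : E → Sym2 V`. -/

namespace Mg

variable {V E : Type}

/-- No loops: no edge has equal endpoints. -/
def NoLoops (ends : E → Sym2 V) : Prop := ∀ e, ¬ (ends e).IsDiag

/-- Cubic: every vertex is incident with exactly three edges. -/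
def IsCubic (ends : E → Sym2 V) : Prop := ∀ v, {e | v ∈ ends e}.ncard = 3

/-- Reachability using only edges in `F`. -/
def Reach (ends : E → Sym2 V) (F : Set E) : V → V → Prop :=
  Relation.ReflTransGen (fun a b => ∃ e ∈ F, ends e = s(a, b))

/-- Connected. -/
def Connected (ends : E → Sym2 V) : Prop := ∀ v w, Reach ends Set.univ v w

/-- Bridgeless: the endpoints of each edge remain joined after its removal. -/
def Bridgeless (ends : E → Sym2 V) : Prop :=
  ∀ e v w, ends e = s(v, w) → Reach ends {f | f ≠ e} v w

/-- A 2-factor: every vertex is incident with exactly two edges of `F`. -/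
def IsTwoFactor (ends : E → Sym2 V) (F : Set E) : Prop :=
  ∀ v, {e | e ∈ F ∧ v ∈ ends e}.ncard = 2

/-- The component of `v` in the spanning subgraph with edge set `F`. -/
def component (ends : E → Sym2 V) (F : Set E) (v : V) : Set V := {w | Reach ends F v w}

/-- Every 2-factor consists only of 5-cycles: each component of any 2-factor
has exactly five vertices. -/
def TwoFactorsAllC5 (ends : E → Sym2 V) : Prop :=
  ∀ F : Set E, IsTwoFactor ends F → ∀ v, (component ends F v).ncard = 5

/-- A perfect matching: every vertex is incident with exactly one edge of `M`. -/
def IsPerfectMatching (ends : E → Sym2 V) (M : Set E) : Prop :=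
  ∀ v, ∃! e, e ∈ M ∧ v ∈ ends e

/-- A cycle of length `n`: `n` distinct vertices and `n` distinct edges, cyclically. -/
def HasCycle (ends : E → Sym2 V) (n : ℕ) : Prop :=
  ∃ (c : ZMod n → V) (f : ZMod n → E), Function.Injective c ∧ Function.Injective f ∧
    ∀ i, ends (f i) = s(c i, c (i + 1))

end Mg

namespace Mg
open Classical Finset

/-- Edge boundary. -/
noncomputable def dl {V E : Type} [Fintype E] (ends : E → Sym2 V) (X : Finset V) : Finset E :=
  Finset.univ.filter (fun e => ∃ p q, p ∈ X ∧ q ∉ X ∧ ends e = s(p, q))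

/-- Number of endpoints in a set. -/
noncomputable def cnt {V E : Type} (ends : E → Sym2 V) (X : Finset V) (e : E) : ℕ :=
  (X.filter (fun p => p ∈ ends e)).card

theorem mem_dl {V E : Type} [Fintype E] {ends : E → Sym2 V} {X : Finset V} {e : E} :
    e ∈ dl ends X ↔ ∃ p q, p ∈ X ∧ q ∉ X ∧ ends e = s(p, q) := by
  simp [dl]

theorem ne_of_ends {V E : Type} {ends : E → Sym2 V} (hl : NoLoops ends) {e : E} {p q : V}
    (h : ends e = s(p, q)) : p ≠ q := by
  intro hpq
  apply hl e
  rw [h]; simpa using hpq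

theorem exists_ends {V E : Type} {ends : E → Sym2 V} {e : E} {p : V}
    (h : p ∈ ends e) : ∃ q, ends e = s(p, q) := by
  obtain ⟨q, hq⟩ := h
  exact ⟨q, hq⟩

theorem cnt_eq {V E : Type} {ends : E → Sym2 V} (hl : NoLoops ends) (X : Finset V) {e : E} {p q : V}
    (h : ends e = s(p, q)) :
    cnt ends X e = (if p ∈ X then 1 else 0) + (if q ∈ X then 1 else 0) := by
  have hpq := ne_of_ends hl h
  have : X.filter (fun r => r ∈ ends e) = X.filter (fun r => r = p) ∪ X.filter (fun r => r = q) := by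
    ext r; simp [h]; tauto
  unfold cnt
  rw [this, Finset.card_union_of_disjoint]
  · have h2 : ∀ p, (X.filter (fun r => r = p)).card = if p ∈ X then 1 else 0 := by
      intro p
      split_ifs with hp
      · rw [Finset.card_eq_one]
        refine ⟨p, ?_⟩
        ext r; simp only [Finset.mem_filter, Finset.mem_singleton]
        constructor
        · exact fun h => h.2
        · rintro rfl; exact ⟨hp, rfl⟩
      · rw [Finset.card_eq_zero]
        ext r; simp only [Finset.mem_filter, Finset.notMem_empty, iff_false]
        rintro ⟨h, rfl⟩; exact hp h
    rw [h2, h2]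
  · rw [Finset.disjoint_left]
    intro r; simp; rintro - rfl _; exact hpq

theorem cnt_parity {V E : Type} [Fintype E] {ends : E → Sym2 V} (hl : NoLoops ends)
    (X : Finset V) (e : E) : (cnt ends X e : ZMod 2) = if e ∈ dl ends X then 1 else 0 := by
  obtain ⟨p, q, h⟩ : ∃ p q, ends e = s(p, q) := by
    induction he : ends e with
    | _ p q => exact ⟨p, q, rfl⟩
  have h1 : e ∈ dl ends X ↔ ((p ∈ X ∧ q ∉ X) ∨ (q ∈ X ∧ p ∉ X)) := by
    rw [mem_dl]
    constructor
    · rintro ⟨a, b, ha, hb, hab⟩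
      rw [h, Sym2.eq_iff] at hab
      rcases hab with ⟨rfl, rfl⟩ | ⟨rfl, rfl⟩ <;> tauto
    · rintro (⟨h1, h2⟩ | ⟨h1, h2⟩)
      · exact ⟨p, q, h1, h2, h⟩
      · exact ⟨q, p, h1, h2, by rw [h, Sym2.eq_swap]⟩
  rw [cnt_eq hl X h, if_congr h1 rfl rfl]
  by_cases hp : p ∈ X <;> by_cases hq : q ∈ X <;> simp [hp, hq]
  decide

theorem sum_cnt {V E : Type} [Fintype E] {ends : E → Sym2 V} (M : Finset E) (X : Finset V) (d : ℕ)
    (hd : ∀ v, (M.filter (fun e => v ∈ ends e)).card = d) :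
    ∑ e ∈ M, cnt ends X e = d * X.card := by
  unfold cnt
  simp_rw [Finset.card_filter]
  rw [Finset.sum_comm]
  simp_rw [← Finset.card_filter]
  simp [hd, mul_comm]

theorem deg3 {V E : Type} [Fintype E] {ends : E → Sym2 V} (hc : IsCubic ends) (v : V) :
    ((Finset.univ : Finset E).filter (fun e => v ∈ ends e)).card = 3 := by
  rw [← hc v, Set.ncard_eq_toFinset_card']
  congr 1; ext; simp

theorem parity_gen {V E : Type} [Fintype E] {ends : E → Sym2 V} (hl : NoLoops ends)
    (M : Finset E) (X : Finset V) (d : ℕ) (hd' : Odd d)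
    (hd : ∀ v, (M.filter (fun e => v ∈ ends e)).card = d) :
    Odd (M ∩ dl ends X).card ↔ Odd X.card := by
  have h := congrArg (fun n : ℕ => (n : ZMod 2)) (sum_cnt M X d hd)
  simp only [Nat.cast_sum, Nat.cast_mul, cnt_parity hl] at h
  rw [Finset.sum_ite_mem] at h
  simp only [sum_const, nsmul_eq_mul, mul_one] at h
  rw [ZMod.natCast_eq_one_iff_odd.2 hd', one_mul] at h
  rw [← ZMod.natCast_eq_one_iff_odd, ← ZMod.natCast_eq_one_iff_odd, h]

theorem dl_parity {V E : Type} [Fintype E] {ends : E → Sym2 V} (hl : NoLoops ends)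
    (hc : IsCubic ends) (X : Finset V) : Odd (dl ends X).card ↔ Odd X.card := by
  have := parity_gen hl Finset.univ X 3 (by decide) (fun v => by convert deg3 hc v)
  simpa using this

theorem card_even {V E : Type} [Fintype V] [Fintype E] {ends : E → Sym2 V} (hl : NoLoops ends)
    (hc : IsCubic ends) : Even (Fintype.card V) := by
  have := dl_parity hl hc Finset.univ
  have h0 : dl ends (Finset.univ : Finset V) = ∅ := by
    ext e; simp [mem_dl]
  rw [h0] at this
  rw [← Nat.not_odd_iff_even, ← Finset.card_univ, ← this]
  simp

theorem reach_closed {V E : Type} {ends : E → Sym2 V} {F : Set E} {X : Set V} {p q : V}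
    (hX : ∀ e ∈ F, ∀ a b, ends e = s(a, b) → a ∈ X → b ∈ X) (hp : p ∈ X)
    (h : Reach ends F p q) : q ∈ X := by
  induction h with
  | refl => exact hp
  | tail _ h ih => obtain ⟨e, he, h⟩ := h; exact hX e he _ _ h ih

theorem dl_ne_one {V E : Type} [Fintype E] {ends : E → Sym2 V} (hb : Bridgeless ends)
    (X : Finset V) : (dl ends X).card ≠ 1 := by
  intro h
  obtain ⟨e, he⟩ := Finset.card_eq_one.1 h
  have : e ∈ dl ends X := by simp [he]
  obtain ⟨p, q, hp, hq, hpq⟩ := mem_dl.1 this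
  refine hq (reach_closed (X := (X : Set V)) ?_ hp (hb e p q hpq))
  intro f hf a b hab ha
  by_contra hb'
  have : f ∈ dl ends X := mem_dl.2 ⟨a, b, ha, hb', hab⟩
  rw [he] at this
  exact hf (by simpa using this)

theorem three_le {V E : Type} [Fintype E] {ends : E → Sym2 V} (hl : NoLoops ends)
    (hc : IsCubic ends) (hb : Bridgeless ends) {X : Finset V} (hX : Odd X.card) :
    3 ≤ (dl ends X).card := by
  have h1 := (dl_parity hl hc X).2 hX
  have h2 := dl_ne_one hb X
  obtain ⟨k, hk⟩ := h1
  omega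

theorem dl_pos {V E : Type} [Fintype E] {ends : E → Sym2 V} (hconn : Connected ends)
    {X : Finset V} {p q : V} (hp : p ∈ X) (hq : q ∉ X) : 1 ≤ (dl ends X).card := by
  rw [Nat.one_le_iff_ne_zero, Ne, Finset.card_eq_zero]
  intro h
  refine hq (reach_closed (X := (X : Set V)) ?_ hp (hconn p q))
  intro f hf a b hab ha
  by_contra hb'
  have : f ∈ dl ends X := mem_dl.2 ⟨a, b, ha, hb', hab⟩
  simp [h] at this

theorem count_le {V E : Type} [Fintype E] {ends : E → Sym2 V} (hl : NoLoops ends)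
    (hc : IsCubic ends) (S : Finset V) (Q : Finset (Finset V)) (I : Finset E)
    (hQ : ∀ K ∈ Q, ∀ L ∈ Q, K ≠ L → Disjoint K L) (hS : ∀ K ∈ Q, Disjoint K S)
    (hcl : ∀ K ∈ Q, ∀ e a b, ends e = s(a, b) → a ∈ K → b ∉ K → b ∈ S)
    (hI : ∀ e ∈ I, ∀ a ∈ ends e, a ∈ S) :
    2 * I.card + ∑ K ∈ Q, (dl ends K).card ≤ 3 * S.card := by
  have key : ∀ K ∈ Q, ∀ e ∈ dl ends K, ∃ a b, ends e = s(a, b) ∧ a ∈ K ∧ b ∈ S ∧ a ∉ S := by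
    intro K hK e he
    obtain ⟨a, b, ha, hb, hab⟩ := mem_dl.1 he
    exact ⟨a, b, hab, ha, hcl K hK e a b hab ha hb, Finset.disjoint_left.1 (hS K hK) ha⟩
  rw [← sum_cnt Finset.univ S 3 (fun v => by convert deg3 hc v)]
  rw [← Finset.card_biUnion]
  · have hdis : Disjoint I (Q.biUnion (dl ends)) := by
      rw [Finset.disjoint_left]
      intro e he he'
      rw [Finset.mem_biUnion] at he'
      obtain ⟨K, hK, he'⟩ := he'
      obtain ⟨a, b, hab, -, -, ha⟩ := key K hK e he'
      exact ha (hI e he a (by simp [hab]))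
    calc _ = ∑ e ∈ I, 2 + ∑ e ∈ Q.biUnion (dl ends), 1 := by simp [mul_comm]
      _ ≤ ∑ e ∈ I, cnt ends S e + ∑ e ∈ Q.biUnion (dl ends), cnt ends S e := by
        gcongr with e he e he
        · obtain ⟨p, q, h⟩ : ∃ p q, ends e = s(p, q) := by
            induction he : ends e with
            | _ p q => exact ⟨p, q, rfl⟩
          rw [cnt_eq hl S h, if_pos (hI e he p (by simp [h])), if_pos (hI e he q (by simp [h]))]
        · rw [Finset.mem_biUnion] at he
          obtain ⟨K, hK, he⟩ := he
          obtain ⟨a, b, hab, -, hb, -⟩ := key K hK e he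
          rw [cnt_eq hl S hab, if_pos hb]; omega
      _ = ∑ e ∈ I ∪ Q.biUnion (dl ends), cnt ends S e := by
        rw [Finset.sum_union hdis]
      _ ≤ _ := Finset.sum_le_sum_of_subset (Finset.subset_univ _)
  · intro K hK L hL hKL
    rw [Function.onFun, Finset.disjoint_left]
    intro e he he'
    obtain ⟨a, b, hab, ha, hb, ha'⟩ := key K hK e he
    obtain ⟨c, d, hcd, hc', hd, hd'⟩ := key L hL e he'
    rw [hab, Sym2.eq_iff] at hcd
    rcases hcd with ⟨rfl, rfl⟩ | ⟨rfl, rfl⟩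
    · exact Finset.disjoint_left.1 (hQ K hK L hL hKL) ha hc'
    · exact ha' hd

/-- Finset form of Tutte. -/
theorem tutte_fin {A : Type} [Fintype A] (H : SimpleGraph A)
    (hno : ¬ ∃ M : H.Subgraph, M.IsPerfectMatching) :
    ∃ (S : Finset A) (P : Finset (Finset A)),
      (∀ K ∈ P, ∀ L ∈ P, K ≠ L → Disjoint K L) ∧ (∀ K ∈ P, Disjoint K S) ∧
      (∀ K ∈ P, Odd K.card) ∧ (∀ K ∈ P, ∀ a b, H.Adj a b → a ∈ K → b ∉ K → b ∈ S) ∧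
      S.card + 1 ≤ P.card := by
  rw [SimpleGraph.tutte] at hno
  push Not at hno
  obtain ⟨T, hT⟩ := hno
  unfold SimpleGraph.IsTutteViolator at hT
  let J := ((⊤ : H.Subgraph).deleteVerts T).coe
  let φ : J.ConnectedComponent → Finset A := fun c => (Subtype.val '' c.supp).toFinset
  have hφ : ∀ c a, a ∈ φ c ↔ ∃ h : a ∈ ((⊤ : H.Subgraph).deleteVerts T).verts,
      J.connectedComponentMk ⟨a, h⟩ = c := by
    intro c a
    simp [φ, J]
  have hinj : Function.Injective φ := by
    intro c d hcd
    obtain ⟨a, ha⟩ := c.nonempty_supp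
    have h1 : (a : A) ∈ φ c := (hφ c a).2 ⟨a.2, ha⟩
    have h2 := h1
    rw [hcd] at h2
    obtain ⟨_, h1⟩ := (hφ _ _).1 h1
    obtain ⟨_, h2⟩ := (hφ _ _).1 h2
    exact h1.symm.trans h2
  refine ⟨T.toFinset, (J.oddComponents.toFinset).image φ, ?_, ?_, ?_, ?_, ?_⟩
  · intro K hK L hL hKL
    simp only [Finset.mem_image] at hK hL
    obtain ⟨c, -, rfl⟩ := hK
    obtain ⟨d, -, rfl⟩ := hL
    rw [Finset.disjoint_left]
    intro a h1 h2
    obtain ⟨_, h1⟩ := (hφ _ _).1 h1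
    obtain ⟨_, h2⟩ := (hφ _ _).1 h2
    exact hKL (by rw [h1.symm.trans h2])
  · intro K hK
    simp only [Finset.mem_image] at hK
    obtain ⟨c, -, rfl⟩ := hK
    rw [Finset.disjoint_left]
    intro a h1 h2
    obtain ⟨h, h1⟩ := (hφ _ _).1 h1
    simp at h h2
    exact h h2
  · intro K hK
    simp only [Finset.mem_image] at hK
    obtain ⟨c, hc, rfl⟩ := hK
    have hc' : Odd c.supp.ncard := by simpa [SimpleGraph.oddComponents] using hc
    simp only [φ]
    rw [← Set.ncard_eq_toFinset_card', Set.ncard_image_of_injective _ Subtype.val_injective]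
    exact hc'
  · intro K hK a b hab ha hb
    simp only [Finset.mem_image] at hK
    obtain ⟨c, -, rfl⟩ := hK
    by_contra hbT
    apply hb
    obtain ⟨h, h1⟩ := (hφ _ _).1 ha
    have hbT' : b ∉ T := by simpa using hbT
    have haT' : a ∉ T := by simpa using h
    refine (hφ _ _).2 ⟨by simpa using hbT', ?_⟩
    rw [← h1]
    symm
    apply SimpleGraph.ConnectedComponent.connectedComponentMk_eq_of_adj
    simp [J, hab, haT', hbT']
  · rw [Finset.card_image_of_injective _ hinj, ← Set.ncard_eq_toFinset_card',
      ← Set.ncard_eq_toFinset_card']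
    exact hT

end Mg
namespace Mg
open Classical Finset

theorem tutte_ext {V E : Type} [Fintype V] [Fintype E] {ends : E → Sym2 V}
    (hl : NoLoops ends) (M0 : Set E) (W : Finset V)
    (hW : ∀ v ∈ W, ∃! e, e ∈ M0 ∧ v ∈ ends e) (hM0 : ∀ e ∈ M0, ∀ v ∈ ends e, v ∈ W)
    (hno : ¬ ∃ M, IsPerfectMatching ends M ∧ M0 ⊆ M) :
    ∃ (S : Finset V) (P : Finset (Finset V)), W ⊆ S ∧
      (∀ K ∈ P, ∀ L ∈ P, K ≠ L → Disjoint K L) ∧ (∀ K ∈ P, Disjoint K S) ∧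
      (∀ K ∈ P, Odd K.card) ∧
      (∀ K ∈ P, ∀ e a b, ends e = s(a, b) → a ∈ K → b ∉ K → b ∈ S) ∧
      S.card + 1 ≤ P.card + W.card := by
  let A := {v : V // v ∉ W}
  let H : SimpleGraph A :=
    { Adj := fun a b => ∃ e, ends e = s(a.1, b.1)
      symm := ⟨by
        rintro a b ⟨e, he⟩
        exact ⟨e, by rw [he, Sym2.eq_swap]⟩⟩
      loopless := ⟨by
        rintro a ⟨e, he⟩
        exact ne_of_ends hl he rfl⟩ }
  have hH : ¬ ∃ M : H.Subgraph, M.IsPerfectMatching := by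
    rintro ⟨M, hM⟩
    apply hno
    have hex : ∀ z : Sym2 V, ∃ e : Option E, (∃ e', ends e' = z) → ∃ e', e = some e' ∧ ends e' = z := by
      intro z
      by_cases h : ∃ e', ends e' = z
      · obtain ⟨e', h⟩ := h
        exact ⟨some e', fun _ => ⟨e', rfl, h⟩⟩
      · exact ⟨none, fun h' => absurd h' h⟩
    choose ε hε using hex
    refine ⟨M0 ∪ {e | ∃ a b : A, M.Adj a b ∧ ε s(a.1, b.1) = some e}, ?_, Set.subset_union_left⟩
    have hend : ∀ a b : A, M.Adj a b → ∀ e, ε s(a.1, b.1) = some e → ends e = s(a.1, b.1) := by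
      intro a b hab e he
      obtain ⟨e', h1, h2⟩ := hε s(a.1, b.1) (M.adj_sub hab)
      rw [he] at h1
      rw [Option.some.inj h1, h2]
    intro v
    by_cases hv : v ∈ W
    · obtain ⟨e, ⟨he1, he2⟩, he3⟩ := hW v hv
      refine ⟨e, ⟨Or.inl he1, he2⟩, ?_⟩
      rintro f ⟨hf | ⟨a, b, hab, hf⟩, hf2⟩
      · exact he3 f ⟨hf, hf2⟩
      · rw [hend a b hab f hf] at hf2
        rcases Sym2.mem_iff.1 hf2 with rfl | rfl
        · exact absurd hv a.2
        · exact absurd hv b.2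
    · obtain ⟨b, hb, hb'⟩ := hM.1 (hM.2 ⟨v, hv⟩)
      obtain ⟨e, h1, h2⟩ := hε s(v, b.1) (M.adj_sub hb)
      refine ⟨e, ⟨Or.inr ⟨⟨v, hv⟩, b, hb, h1⟩, by simp [h2]⟩, ?_⟩
      rintro f ⟨hf | ⟨c, d, hcd, hf⟩, hf2⟩
      · exact absurd (hM0 f hf v hf2) hv
      · rw [hend c d hcd f hf] at hf2
        rcases Sym2.mem_iff.1 hf2 with rfl | rfl
        · have : d = b := hb' d hcd
          subst this
          exact Option.some.inj (hf.symm.trans h1)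
        · have : c = b := hb' c hcd.symm
          subst this
          rw [Sym2.eq_swap] at hf
          exact Option.some.inj (hf.symm.trans h1)
  obtain ⟨S, P, h1, h2, h3, h4, h5⟩ := tutte_fin H hH
  let ι : A ↪ V := Function.Embedding.subtype _
  have hι : ∀ a : A, ι a = a.1 := fun _ => rfl
  have hWS : Disjoint W (S.map ι) := by
    rw [Finset.disjoint_left]
    intro a ha ha'
    rw [Finset.mem_map] at ha'
    obtain ⟨c, -, rfl⟩ := ha'
    exact c.2 ha
  refine ⟨W ∪ S.map ι, P.map ⟨fun K => K.map ι, Finset.map_injective ι⟩, Finset.subset_union_left,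
    ?_, ?_, ?_, ?_, ?_⟩
  · intro K hK L hL hKL
    simp only [Finset.mem_map, Function.Embedding.coeFn_mk] at hK hL
    obtain ⟨K, hK, rfl⟩ := hK
    obtain ⟨L, hL, rfl⟩ := hL
    rw [Finset.disjoint_map]
    exact h1 K hK L hL (fun h => hKL (by rw [h]))
  · intro K hK
    simp only [Finset.mem_map, Function.Embedding.coeFn_mk] at hK
    obtain ⟨K, hK, rfl⟩ := hK
    rw [Finset.disjoint_union_right]
    constructor
    · rw [Finset.disjoint_left]
      intro a ha ha'
      rw [Finset.mem_map] at ha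
      obtain ⟨c, -, rfl⟩ := ha
      exact c.2 ha'
    · rw [Finset.disjoint_map]
      exact h2 K hK
  · intro K hK
    simp only [Finset.mem_map, Function.Embedding.coeFn_mk] at hK
    obtain ⟨K, hK, rfl⟩ := hK
    rw [Finset.card_map]
    exact h3 K hK
  · intro K hK e a b hab ha hb
    simp only [Finset.mem_map, Function.Embedding.coeFn_mk] at hK
    obtain ⟨K, hK, rfl⟩ := hK
    rw [Finset.mem_map] at ha
    obtain ⟨a, ha, rfl⟩ := ha
    rw [Finset.mem_union]
    by_cases hbW : b ∈ W
    · exact Or.inl hbW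
    · right
      rw [Finset.mem_map]
      refine ⟨⟨b, hbW⟩, h4 K hK a ⟨b, hbW⟩ ⟨e, hab⟩ ha ?_, rfl⟩
      intro h
      exact hb (Finset.mem_map.2 ⟨_, h, rfl⟩)
  · rw [Finset.card_union_of_disjoint hWS, Finset.card_map, Finset.card_map]
    omega

theorem tutte_ext2 {V E : Type} [Fintype V] [Fintype E] {ends : E → Sym2 V}
    (hl : NoLoops ends) (hc : IsCubic ends) (M0 : Set E) (W : Finset V) (hWe : Even W.card)
    (hW : ∀ v ∈ W, ∃! e, e ∈ M0 ∧ v ∈ ends e) (hM0 : ∀ e ∈ M0, ∀ v ∈ ends e, v ∈ W)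
    (hno : ¬ ∃ M, IsPerfectMatching ends M ∧ M0 ⊆ M) :
    ∃ (S : Finset V) (P : Finset (Finset V)), W ⊆ S ∧
      (∀ K ∈ P, ∀ L ∈ P, K ≠ L → Disjoint K L) ∧ (∀ K ∈ P, Disjoint K S) ∧
      (∀ K ∈ P, Odd K.card) ∧
      (∀ K ∈ P, ∀ e a b, ends e = s(a, b) → a ∈ K → b ∉ K → b ∈ S) ∧
      S.card + 2 ≤ P.card + W.card := by
  obtain ⟨S, P, h0, h1, h2, h3, h4, h5⟩ := tutte_ext hl M0 W hW hM0 hno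
  by_cases h6 : S.card + 2 ≤ P.card + W.card
  · exact ⟨S, P, h0, h1, h2, h3, h4, h6⟩
  have h7 : P.card + W.card = S.card + 1 := by omega
  let U : Finset V := P.biUnion id
  let R : Finset V := (S ∪ U)ᶜ
  have hU : U.card = ∑ K ∈ P, K.card := Finset.card_biUnion (fun K hK L hL h => h1 K hK L hL h)
  have hUS : Disjoint S U := by
    rw [Finset.disjoint_biUnion_right]
    exact fun K hK => (h2 K hK).symm
  have hR : R.card + (S.card + U.card) = Fintype.card V := by
    rw [← Finset.card_union_of_disjoint hUS, Finset.card_compl_add_card]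
  have hUP : (U.card : ZMod 2) = P.card := by
    rw [hU, Nat.cast_sum, Finset.sum_congr rfl (fun K hK => ZMod.natCast_eq_one_iff_odd.2 (h3 K hK))]
    simp
  have hUP' : U.card % 2 = P.card % 2 := (ZMod.natCast_eq_natCast_iff' _ _ 2).1 hUP
  have hRo : Odd R.card := by
    obtain ⟨m, hm⟩ := card_even hl hc
    obtain ⟨n, hn⟩ := hWe
    rw [Nat.odd_iff]
    omega
  have hRmem : ∀ a, a ∈ R ↔ a ∉ S ∧ ∀ K ∈ P, a ∉ K := by
    intro a; simp [R, U]
  have hRd : ∀ K ∈ P, Disjoint K R := by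
    intro K hK
    rw [Finset.disjoint_left]
    intro a ha ha'
    exact ((hRmem a).1 ha').2 K hK ha
  have hRP : R ∉ P := by
    intro h
    have := hRd R h
    rw [disjoint_self] at this
    rw [this] at hRo
    simp at hRo
  refine ⟨S, insert R P, h0, ?_, ?_, ?_, ?_, ?_⟩
  · intro K hK L hL hKL
    rw [Finset.mem_insert] at hK hL
    rcases hK with rfl | hK <;> rcases hL with rfl | hL
    · exact absurd rfl hKL
    · exact (hRd L hL).symm
    · exact hRd K hK
    · exact h1 K hK L hL hKL
  · intro K hK
    rcases Finset.mem_insert.1 hK with rfl | hK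
    · rw [Finset.disjoint_left]
      exact fun a ha => ((hRmem a).1 ha).1
    · exact h2 K hK
  · intro K hK
    rcases Finset.mem_insert.1 hK with rfl | hK
    · exact hRo
    · exact h3 K hK
  · intro K hK e a b hab ha hb
    rcases Finset.mem_insert.1 hK with rfl | hK
    · by_contra hbS
      apply hb
      rw [hRmem]
      refine ⟨hbS, fun K hK hbK => ?_⟩
      have ha' := (hRmem a).1 ha
      exact ha'.1 (h4 K hK e b a (by rw [hab, Sym2.eq_swap]) hbK (ha'.2 K hK))
    · exact h4 K hK e a b hab ha hb
  · rw [Finset.card_insert_of_notMem hRP]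
    omega

theorem schonberger {V E : Type} [Fintype V] [Fintype E] {ends : E → Sym2 V}
    (hl : NoLoops ends) (hc : IsCubic ends) (hb : Bridgeless ends) (e : E) :
    ∃ M, IsPerfectMatching ends M ∧ e ∈ M := by
  by_contra hno
  obtain ⟨p, q, h⟩ : ∃ p q, ends e = s(p, q) := by
    induction he : ends e with
    | _ p q => exact ⟨p, q, rfl⟩
  have hpq := ne_of_ends hl h
  obtain ⟨S, P, h0, h1, h2, h3, h4, h5⟩ := tutte_ext2 hl hc {e} {p, q}
    (by rw [Finset.card_pair hpq]; decide)
    (by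
      intro v hv
      refine ⟨e, ⟨rfl, ?_⟩, fun f hf => hf.1⟩
      rw [h]; simpa using hv)
    (by
      rintro f rfl v hv
      rw [h] at hv; simpa using hv)
    (by simpa using hno)
  have := count_le hl hc S P {e} h1 h2 h4 (by
    intro f hf a ha
    rw [Finset.mem_singleton] at hf
    subst hf
    rw [h] at ha
    exact h0 (by simpa using ha))
  have h6 : ∑ K ∈ P, 3 ≤ ∑ K ∈ P, (dl ends K).card :=
    Finset.sum_le_sum (fun K hK => three_le hl hc hb (h3 K hK))
  rw [Finset.card_pair hpq] at h5
  simp at h6 this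
  omega

/-- The structure forced when two end edges of a 3-path are in no common perfect matching. -/
theorem structure_lem {V E : Type} [Fintype V] [Fintype E] {ends : E → Sym2 V}
    (hl : NoLoops ends) (hc : IsCubic ends) (hb : Bridgeless ends) (hconn : Connected ends)
    {u v w x : V} {e₁ e₂ e₃ : E}
    (h₁ : ends e₁ = s(u, v)) (h₂ : ends e₂ = s(v, w)) (h₃ : ends e₃ = s(w, x))
    (huw : u ≠ w) (hvx : v ≠ x) (hux : u ≠ x)
    (hno : ¬ ∃ M, IsPerfectMatching ends M ∧ e₁ ∈ M ∧ e₃ ∈ M) :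
    ∃ S : Finset V, u ∈ S ∧ v ∈ S ∧ w ∈ S ∧ x ∈ S ∧
      (∀ e, (∀ a ∈ ends e, a ∈ S) → e = e₁ ∨ e = e₂ ∨ e = e₃) ∧
      ∀ a, a ∉ S → ∃ K : Finset V, a ∈ K ∧ Odd K.card ∧ Disjoint K S ∧ (dl ends K).card = 3 ∧
        ∀ e a b, ends e = s(a, b) → a ∈ K → b ∉ K → b ∈ S := by
  have huv := ne_of_ends hl h₁
  have hvw := ne_of_ends hl h₂
  have hwx := ne_of_ends hl h₃
  have hcard : ({u, v, w, x} : Finset V).card = 4 := by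
    rw [Finset.card_insert_of_notMem, Finset.card_insert_of_notMem, Finset.card_pair hwx] <;>
      simp [*]
  have h12 : e₁ ≠ e₂ := by
    rintro rfl; rw [h₁, Sym2.eq_iff] at h₂; tauto
  have h23 : e₂ ≠ e₃ := by
    rintro rfl; rw [h₂, Sym2.eq_iff] at h₃; tauto
  have h13 : e₁ ≠ e₃ := by
    rintro rfl; rw [h₁, Sym2.eq_iff] at h₃; tauto
  obtain ⟨S, P, h0, h1, h2, h3, h4, h5⟩ := tutte_ext2 hl hc {e₁, e₃} {u, v, w, x}
    (by rw [hcard]; decide)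
    (by
      intro z hz
      simp only [Finset.mem_insert, Finset.mem_singleton] at hz
      rcases hz with rfl | rfl | rfl | rfl
      · refine ⟨e₁, ⟨by simp, by simp [h₁]⟩, ?_⟩
        rintro f ⟨rfl | rfl, hf⟩
        · rfl
        · rw [h₃] at hf; simp at hf; tauto
      · refine ⟨e₁, ⟨by simp, by simp [h₁]⟩, ?_⟩
        rintro f ⟨rfl | rfl, hf⟩
        · rfl
        · rw [h₃] at hf; simp at hf; tauto
      · refine ⟨e₃, ⟨by simp, by simp [h₃]⟩, ?_⟩
        rintro f ⟨rfl | rfl, hf⟩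
        · rw [h₁] at hf; simp at hf; rcases hf with rfl | rfl <;> tauto
        · rfl
      · refine ⟨e₃, ⟨by simp, by simp [h₃]⟩, ?_⟩
        rintro f ⟨rfl | rfl, hf⟩
        · rw [h₁] at hf; simp at hf; rcases hf with rfl | rfl <;> tauto
        · rfl)
    (by
      rintro f (rfl | rfl) z hz
      · rw [h₁] at hz; simp at hz ⊢; tauto
      · rw [h₃] at hz; simp at hz ⊢; tauto)
    (by
      rintro ⟨M, hM, hM'⟩
      exact hno ⟨M, hM, hM' (by simp), hM' (by simp)⟩)
  have hu : u ∈ S := h0 (by simp)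
  have hv : v ∈ S := h0 (by simp)
  have hw : w ∈ S := h0 (by simp)
  have hx : x ∈ S := h0 (by simp)
  rw [hcard] at h5
  have hI : ∀ e ∈ ({e₁, e₂, e₃} : Finset E), ∀ a ∈ ends e, a ∈ S := by
    intro e he a ha
    simp only [Finset.mem_insert, Finset.mem_singleton] at he
    rcases he with rfl | rfl | rfl
    · rw [h₁] at ha; rcases Sym2.mem_iff.1 ha with rfl | rfl <;> assumption
    · rw [h₂] at ha; rcases Sym2.mem_iff.1 ha with rfl | rfl <;> assumption
    · rw [h₃] at ha; rcases Sym2.mem_iff.1 ha with rfl | rfl <;> assumption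
  have hIc : ({e₁, e₂, e₃} : Finset E).card = 3 := Finset.card_eq_three.2 ⟨_, _, _, h12, h13, h23, rfl⟩
  have h6 : ∑ K ∈ P, 3 ≤ ∑ K ∈ P, (dl ends K).card :=
    Finset.sum_le_sum (fun K hK => three_le hl hc hb (h3 K hK))
  have h6' : 3 * P.card ≤ ∑ K ∈ P, (dl ends K).card := by simpa [mul_comm] using h6
  have h7 := count_le hl hc S P _ h1 h2 h4 hI
  rw [hIc] at h7
  refine ⟨S, hu, hv, hw, hx, ?_, ?_⟩
  · intro e he
    by_contra hne
    have hne' : e ∉ ({e₁, e₂, e₃} : Finset E) := by simpa using hne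
    have := count_le hl hc S P (insert e {e₁, e₂, e₃}) h1 h2 h4 (by
      intro f hf
      rcases Finset.mem_insert.1 hf with rfl | hf
      · exact he
      · exact hI f hf)
    rw [Finset.card_insert_of_notMem hne', hIc] at this
    omega
  · intro a ha
    have hex : ∃ K ∈ P, a ∈ K := by
      by_contra hnot
      push Not at hnot
      let R : Finset V := (S ∪ P.biUnion id)ᶜ
      have hRmem : ∀ a, a ∈ R ↔ a ∉ S ∧ ∀ K ∈ P, a ∉ K := by
        intro a; simp [R]
      have haR : a ∈ R := (hRmem a).2 ⟨ha, hnot⟩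
      have hRd : ∀ K ∈ P, Disjoint K R := by
        intro K hK
        rw [Finset.disjoint_left]
        intro a ha ha'
        exact ((hRmem a).1 ha').2 K hK ha
      have hRP : R ∉ P := fun h => ((hRmem a).1 haR).2 R h haR
      have := count_le hl hc S (insert R P) _ (by
          intro K hK L hL hKL
          rw [Finset.mem_insert] at hK hL
          rcases hK with rfl | hK <;> rcases hL with rfl | hL
          · exact absurd rfl hKL
          · exact (hRd L hL).symm
          · exact hRd K hK
          · exact h1 K hK L hL hKL)
        (by
          intro K hK
          rcases Finset.mem_insert.1 hK with rfl | hK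
          · rw [Finset.disjoint_left]
            exact fun a ha => ((hRmem a).1 ha).1
          · exact h2 K hK)
        (by
          intro K hK e a b hab ha hb
          rcases Finset.mem_insert.1 hK with rfl | hK
          · by_contra hbS
            apply hb
            rw [hRmem]
            refine ⟨hbS, fun K hK hbK => ?_⟩
            have ha' := (hRmem a).1 ha
            exact ha'.1 (h4 K hK e b a (by rw [hab, Sym2.eq_swap]) hbK (ha'.2 K hK))
          · exact h4 K hK e a b hab ha hb) hI
      rw [Finset.sum_insert hRP, hIc] at this
      have h8 : 1 ≤ (dl ends R).card :=
        dl_pos hconn haR (q := u) (fun h => ((hRmem u).1 h).1 hu)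
      omega
    obtain ⟨K, hK, haK⟩ := hex
    refine ⟨K, haK, h3 K hK, h2 K hK, ?_, h4 K hK⟩
    have h8 : ∑ L ∈ P.erase K, 3 ≤ ∑ L ∈ P.erase K, (dl ends L).card :=
      Finset.sum_le_sum (fun L hL => three_le hl hc hb (h3 L (Finset.mem_of_mem_erase hL)))
    have h9 := three_le hl hc hb (h3 K hK)
    have h10 := Finset.add_sum_erase P (fun L => (dl ends L).card) hK
    have h11 := Finset.card_erase_add_one hK
    simp only [Finset.sum_const, smul_eq_mul] at h8
    omega

end Mg
namespace Mg
open Classical Finset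

theorem third {V E : Type} [Fintype E] {ends : E → Sym2 V} (hc : IsCubic ends) {p : V} (f g : E) :
    ∃ k, p ∈ ends k ∧ k ≠ f ∧ k ≠ g := by
  by_contra hno
  push Not at hno
  have h : (Finset.univ.filter (fun e => p ∈ ends e)) ⊆ {f, g} := by
    intro k hk
    simp only [Finset.mem_filter, Finset.mem_univ, true_and] at hk
    by_cases hkf : k = f
    · simp [hkf]
    · simp [hno k hk hkf]
  have h1 := Finset.card_le_card h
  rw [deg3 hc p] at h1
  have := Finset.card_le_two (a := f) (b := g)
  omega

theorem edges3 {V E : Type} [Fintype E] {ends : E → Sym2 V} (hc : IsCubic ends) {p : V}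
    {f g k e : E} (hf : p ∈ ends f) (hg : p ∈ ends g) (hk : p ∈ ends k) (he : p ∈ ends e)
    (hfg : f ≠ g) (hfk : f ≠ k) (hgk : g ≠ k) : e = f ∨ e = g ∨ e = k := by
  have h : ({f, g, k} : Finset E) ⊆ (Finset.univ.filter (fun e => p ∈ ends e)) := by
    intro z hz
    simp only [Finset.mem_insert, Finset.mem_singleton] at hz
    rcases hz with rfl | rfl | rfl <;> simp [*]
  have h1 := Finset.eq_of_subset_of_card_le h (by
    rw [deg3 hc p, Finset.card_eq_three.2 ⟨_, _, _, hfg, hfk, hgk, rfl⟩])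
  have : e ∈ ({f, g, k} : Finset E) := by rw [h1]; simp [he]
  simpa using this

theorem nonM_two {V E : Type} [Fintype E] {ends : E → Sym2 V} (hc : IsCubic ends) {M : Set E}
    (hM : IsPerfectMatching ends M) {p : V} {f g e : E} (hf : p ∈ ends f) (hg : p ∈ ends g)
    (he : p ∈ ends e) (hfM : f ∉ M) (hgM : g ∉ M) (heM : e ∉ M) (hfg : f ≠ g) : e = f ∨ e = g := by
  obtain ⟨m, ⟨hm, hm'⟩, -⟩ := hM p
  have h1 : f ≠ m := by rintro rfl; exact hfM hm
  have h2 : g ≠ m := by rintro rfl; exact hgM hm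
  rcases edges3 hc hf hg hm' he hfg h1 h2 with h | h | h
  · exact Or.inl h
  · exact Or.inr h
  · subst h; exact absurd hm heM

theorem other {V E : Type} [Fintype E] {ends : E → Sym2 V} (hc : IsCubic ends) {M : Set E}
    (hM : IsPerfectMatching ends M) (p : V) (f : E) :
    ∃ g q, g ∉ M ∧ g ≠ f ∧ ends g = s(p, q) := by
  obtain ⟨m, ⟨hm, hm'⟩, hu⟩ := hM p
  obtain ⟨k, hk, hkf, hkm⟩ := third hc (p := p) f m
  obtain ⟨q, hq⟩ := exists_ends hk
  exact ⟨k, q, fun h => hkm (hu k ⟨h, hk⟩), hkf, hq⟩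

theorem twofactor {V E : Type} [Fintype E] {ends : E → Sym2 V} (hc : IsCubic ends) {M : Set E}
    (hM : IsPerfectMatching ends M) : IsTwoFactor ends Mᶜ := by
  intro v
  obtain ⟨f, p, hf, -, hfe⟩ := other hc hM v (hM v).choose
  obtain ⟨g, q, hg, hgf, hge⟩ := other hc hM v f
  rw [Set.ncard_eq_two]
  refine ⟨f, g, hgf.symm, ?_⟩
  ext e
  simp only [Set.mem_ofPred_eq, Set.mem_compl_iff, Set.mem_insert_iff, Set.mem_singleton_iff]
  constructor
  · rintro ⟨h1, h2⟩
    exact nonM_two hc hM (p := v) (by simp [hfe]) (by simp [hge]) h2 hf hg h1 hgf.symm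
  · rintro (rfl | rfl)
    · exact ⟨hf, by simp [hfe]⟩
    · exact ⟨hg, by simp [hge]⟩

theorem closed5 {V E : Type} [Fintype E] {ends : E → Sym2 V} (hc : IsCubic ends)
    (h5 : TwoFactorsAllC5 ends) {M : Set E}
    (hM : IsPerfectMatching ends M) (X : Finset V) (p : V) (hp : p ∈ X)
    (hX : ∀ e, e ∉ M → ∀ a ∈ X, ∀ b, ends e = s(a, b) → b ∈ X) : 5 ≤ X.card := by
  rw [← h5 Mᶜ (twofactor hc hM) p, ← Set.ncard_coe_finset]
  apply Set.ncard_le_ncard _ (Finset.finite_toSet X)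
  intro q hq
  exact reach_closed (X := (X : Set V)) (fun e he a b hab ha => hX e he a ha b hab) hp hq

theorem path5 {V E : Type} [Fintype V] [Fintype E] {ends : E → Sym2 V} (hl : NoLoops ends)
    (hc : IsCubic ends) (h5 : TwoFactorsAllC5 ends) {M : Set E} (hM : IsPerfectMatching ends M)
    {p₁ p₂ p₃ p₄ : V} {f g k : E} (hf : ends f = s(p₁, p₂)) (hg : ends g = s(p₂, p₃))
    (hk : ends k = s(p₃, p₄)) (hfM : f ∉ M) (hgM : g ∉ M) (hkM : k ∉ M) (hfg : f ≠ g) (hgk : g ≠ k) :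
    ∃ t l m, l ∉ M ∧ m ∉ M ∧ ends l = s(p₄, t) ∧ ends m = s(t, p₁) ∧
      t ≠ p₁ ∧ t ≠ p₂ ∧ t ≠ p₃ ∧ t ≠ p₄ ∧ p₁ ≠ p₃ ∧ p₁ ≠ p₄ ∧ p₂ ≠ p₄ := by
  have n12 := ne_of_ends hl hf
  have n23 := ne_of_ends hl hg
  have n34 := ne_of_ends hl hk
  have at2 : ∀ e, e ∉ M → p₂ ∈ ends e → e = f ∨ e = g := fun e he hp =>
    nonM_two hc hM (p := p₂) (by simp [hf]) (by simp [hg]) hp hfM hgM he hfg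
  have at3 : ∀ e, e ∉ M → p₃ ∈ ends e → e = g ∨ e = k := fun e he hp =>
    nonM_two hc hM (p := p₃) (by simp [hg]) (by simp [hk]) hp hgM hkM he hgk
  have n13 : p₁ ≠ p₃ := by
    rintro rfl
    have := closed5 hc h5 hM {p₁, p₂} p₁ (by simp) (by
      intro e he a ha b hab
      have hfg' : e = f ∨ e = g := by
        simp only [Finset.mem_insert, Finset.mem_singleton] at ha
        rcases ha with rfl | rfl
        · exact nonM_two hc hM (p := a) (by simp [hf]) (by simp [hg]) (by simp [hab]) hfM hgM he hfg
        · exact at2 e he (by simp [hab])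
      have hb : b ∈ ends e := by simp [hab]
      rcases hfg' with rfl | rfl
      · rw [hf] at hb; simpa using hb
      · rw [hg] at hb; simpa [or_comm] using hb)
    have := Finset.card_le_two (a := p₁) (b := p₂)
    omega
  have n24 : p₂ ≠ p₄ := by
    rintro rfl
    have := closed5 hc h5 hM {p₂, p₃} p₂ (by simp) (by
      intro e he a ha b hab
      have hfg' : e = g ∨ e = k := by
        simp only [Finset.mem_insert, Finset.mem_singleton] at ha
        rcases ha with rfl | rfl
        · exact nonM_two hc hM (p := a) (by simp [hg]) (by simp [hk]) (by simp [hab]) hgM hkM he hgk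
        · exact at3 e he (by simp [hab])
      have hb : b ∈ ends e := by simp [hab]
      rcases hfg' with rfl | rfl
      · rw [hg] at hb; simpa using hb
      · rw [hk] at hb; simpa [or_comm] using hb)
    have := Finset.card_le_two (a := p₂) (b := p₃)
    omega
  have hfk : f ≠ k := by
    rintro rfl
    rw [hf, Sym2.eq_iff] at hk
    rcases hk with ⟨h, -⟩ | ⟨-, h⟩
    · exact n13 h
    · exact n23 h
  have n14 : p₁ ≠ p₄ := by
    rintro rfl
    have := closed5 hc h5 hM {p₁, p₂, p₃} p₂ (by simp) (by
      intro e he a ha b hab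
      have hfg' : e = f ∨ e = g ∨ e = k := by
        simp only [Finset.mem_insert, Finset.mem_singleton] at ha
        rcases ha with rfl | rfl | rfl
        · have := nonM_two hc hM (p := a) (by simp [hf]) (by simp [hk]) (by simp [hab]) hfM hkM he hfk
          tauto
        · have := at2 e he (by simp [hab])
          tauto
        · have := at3 e he (by simp [hab])
          tauto
      have hb : b ∈ ends e := by simp [hab]
      rcases hfg' with rfl | rfl | rfl
      · rw [hf] at hb; simp at hb ⊢; tauto
      · rw [hg] at hb; simp at hb ⊢; tauto
      · rw [hk] at hb; simp at hb ⊢; tauto)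
    have := Finset.card_le_three (a := p₁) (b := p₂) (c := p₃)
    omega
  obtain ⟨l, t, hlM, hlk, hl'⟩ := other hc hM p₄ k
  obtain ⟨m, s, hmM, hmf, hm'⟩ := other hc hM p₁ f
  have at4 : ∀ e, e ∉ M → p₄ ∈ ends e → e = k ∨ e = l := fun e he hp =>
    nonM_two hc hM (p := p₄) (by simp [hk]) (by simp [hl']) hp hkM hlM he hlk.symm
  have at1 : ∀ e, e ∉ M → p₁ ∈ ends e → e = f ∨ e = m := fun e he hp =>
    nonM_two hc hM (p := p₁) (by simp [hf]) (by simp [hm']) hp hfM hmM he hmf.symm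
  have t4 : t ≠ p₄ := (ne_of_ends hl hl').symm
  have s1 : s ≠ p₁ := (ne_of_ends hl hm').symm
  have lf : l ≠ f := by
    rintro rfl
    rw [hf, Sym2.eq_iff] at hl'
    tauto
  have lg : l ≠ g := by
    rintro rfl
    rw [hg, Sym2.eq_iff] at hl'
    tauto
  have mg : m ≠ g := by
    rintro rfl
    rw [hg, Sym2.eq_iff] at hm'
    rcases hm' with ⟨h, -⟩ | ⟨-, h⟩
    · exact n12 h.symm
    · exact n13 h.symm
  have mk : m ≠ k := by
    rintro rfl
    rw [hk, Sym2.eq_iff] at hm'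
    rcases hm' with ⟨h, -⟩ | ⟨-, h⟩
    · exact n13 h.symm
    · exact n14 h.symm
  have t2 : t ≠ p₂ := by
    rintro rfl
    have := at2 l hlM (by simp [hl'])
    tauto
  have t3 : t ≠ p₃ := by
    rintro rfl
    have := at3 l hlM (by simp [hl'])
    tauto
  have s2 : s ≠ p₂ := by
    rintro rfl
    have := at2 m hmM (by simp [hm'])
    tauto
  have s3 : s ≠ p₃ := by
    rintro rfl
    have := at3 m hmM (by simp [hm'])
    tauto
  have t1 : t ≠ p₁ := by
    rintro rfl
    have hlm : l = m := by
      have := at1 l hlM (by simp [hl'])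
      tauto
    have := closed5 hc h5 hM {t, p₂, p₃, p₄} p₂ (by simp) (by
      intro e he a ha b hab
      have hfg' : e = f ∨ e = g ∨ e = k ∨ e = l := by
        simp only [Finset.mem_insert, Finset.mem_singleton] at ha
        rcases ha with rfl | rfl | rfl | rfl
        · have := at1 e he (by simp [hab])
          rw [← hlm] at this
          tauto
        · have := at2 e he (by simp [hab])
          tauto
        · have := at3 e he (by simp [hab])
          tauto
        · have := at4 e he (by simp [hab])
          tauto
      have hb : b ∈ ends e := by simp [hab]
      rcases hfg' with rfl | rfl | rfl | rfl
      · rw [hf] at hb; simp at hb ⊢; tauto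
      · rw [hg] at hb; simp at hb ⊢; tauto
      · rw [hk] at hb; simp at hb ⊢; tauto
      · rw [hl'] at hb; simp at hb ⊢; tauto)
    have := Finset.card_le_four (a := t) (b := p₂) (c := p₃) (d := p₄)
    omega
  have s4 : s ≠ p₄ := by
    rintro rfl
    have := at4 m hmM (by simp [hm'])
    have hml : m = l := by tauto
    rw [hml, hl', Sym2.eq_iff] at hm'
    rcases hm' with ⟨h, -⟩ | ⟨-, h⟩
    · exact n14 h.symm
    · exact t1 h
  have hC := h5 Mᶜ (twofactor hc hM) p₁
  have step : ∀ a b e, e ∉ M → ends e = s(a, b) → a ∈ component ends Mᶜ p₁ →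
      b ∈ component ends Mᶜ p₁ := by
    intro a b e he hab ha
    exact Relation.ReflTransGen.tail ha ⟨e, he, hab⟩
  have c1 : p₁ ∈ component ends Mᶜ p₁ := Relation.ReflTransGen.refl
  have c2 := step _ _ f hfM hf c1
  have c3 := step _ _ g hgM hg c2
  have c4 := step _ _ k hkM hk c3
  have ct := step _ _ l hlM hl' c4
  have cs := step _ _ m hmM hm' c1
  have hst : s = t := by
    by_contra hst
    have hsub : ((({s, t, p₁, p₂, p₃, p₄} : Finset V)) : Set V) ⊆ component ends Mᶜ p₁ := by
      intro z hz
      simp only [Finset.coe_insert, Finset.coe_singleton, Set.mem_insert_iff,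
        Set.mem_singleton_iff] at hz
      rcases hz with rfl | rfl | rfl | rfl | rfl | rfl <;> assumption
    have := Set.ncard_le_ncard hsub (Set.toFinite _)
    rw [hC, Set.ncard_coe_finset, Finset.card_insert_of_notMem (by simp [*]),
      Finset.card_insert_of_notMem (by simp [*]), Finset.card_insert_of_notMem (by simp [*]),
      Finset.card_insert_of_notMem (by simp [*]), Finset.card_pair n34] at this
    omega
  subst hst
  exact ⟨s, l, m, hlM, hmM, hl', by rw [hm', Sym2.eq_swap], t1, t2, t3, t4, n13, n14, n24⟩

theorem pm_parity {V E : Type} [Fintype E] {ends : E → Sym2 V} (hl : NoLoops ends)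
    {M : Set E} (hM : IsPerfectMatching ends M) {K : Finset V} (hK : Odd K.card) :
    ∃ e ∈ M, e ∈ dl ends K := by
  have h := (parity_gen hl M.toFinset K 1 (by decide) (by
    intro v
    obtain ⟨e, he, hu⟩ := hM v
    rw [Finset.card_eq_one]
    refine ⟨e, ?_⟩
    ext f
    simp only [Finset.mem_filter, Set.mem_toFinset, Finset.mem_singleton]
    constructor
    · exact fun h => hu f h
    · rintro rfl; exact he)).2 hK
  obtain ⟨e, he⟩ := Finset.card_pos.1 h.pos
  rw [Finset.mem_inter, Set.mem_toFinset] at he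
  exact ⟨e, he⟩

end Mg

theorem stmt10 {V E : Type} [Fintype V] [Fintype E] (ends : E → Sym2 V)
    (hl : Mg.NoLoops ends) (hc : Mg.IsCubic ends) (hb : Mg.Bridgeless ends)
    (hconn : Mg.Connected ends) (h5 : Mg.TwoFactorsAllC5 ends) :
    ∀ (u v w x : V) (e₁ e₂ e₃ : E),
      ends e₁ = s(u, v) → ends e₂ = s(v, w) → ends e₃ = s(w, x) →
      u ≠ w → v ≠ x → u ≠ x →
      ∃ M : Set E, Mg.IsPerfectMatching ends M ∧ e₁ ∈ M ∧ e₃ ∈ M := by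
  classical
  intro u v w x e₁ e₂ e₃ h₁ h₂ h₃ huw hvx hux
  by_contra hno
  obtain ⟨S, hu, hv, hw, hx, hinner, hcomp⟩ :=
    Mg.structure_lem hl hc hb hconn h₁ h₂ h₃ huw hvx hux hno
  have huv := Mg.ne_of_ends hl h₁
  have hvw := Mg.ne_of_ends hl h₂
  have hwx := Mg.ne_of_ends hl h₃
  have h12 : e₁ ≠ e₂ := by
    rintro rfl; rw [h₁, Sym2.eq_iff] at h₂; tauto
  have h23 : e₂ ≠ e₃ := by
    rintro rfl; rw [h₂, Sym2.eq_iff] at h₃; tauto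
  have hinner' : ∀ e a b, ends e = s(a, b) → a ∈ S → b ∈ S → e = e₁ ∨ e = e₂ ∨ e = e₃ := by
    intro e a b hab ha hb
    apply hinner
    intro c hc
    rw [hab] at hc
    rcases Sym2.mem_iff.1 hc with rfl | rfl <;> assumption
  -- no edge joins x and v
  have hxv : ∀ e, ends e ≠ s(x, v) := by
    intro e he
    rcases hinner' e x v he hx hv with rfl | rfl | rfl
    · rw [h₁, Sym2.eq_iff] at he; tauto
    · rw [h₂, Sym2.eq_iff] at he; tauto
    · rw [h₃, Sym2.eq_iff] at he; tauto
  obtain ⟨M, hM, he1⟩ := Mg.schonberger hl hc hb e₁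
  have he3 : e₃ ∉ M := fun h => hno ⟨M, hM, he1, h⟩
  have he2 : e₂ ∉ M := fun h =>
    h12 ((hM v).unique ⟨he1, by simp [h₁]⟩ ⟨h, by simp [h₂]⟩)
  obtain ⟨f, b, hfM, hf2, hf⟩ := Mg.other hc hM v e₂
  have hf1 : f ≠ e₁ := by rintro rfl; exact hfM he1
  obtain ⟨a, h₄, h₅, h4M, h5M, hh4, hh5, hab, hav, haw, hax, hbw, hbx, -⟩ :=
    Mg.path5 hl hc h5 hM (p₁ := b) (by rw [hf, Sym2.eq_swap]) h₂ h₃ hfM he2 he3 hf2 h23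
  -- h₄ = x a, h₅ = a b
  have hbS : b ∉ S := by
    intro h
    rcases hinner' f v b hf hv h with rfl | rfl | rfl
    · exact hf1 rfl
    · exact hf2 rfl
    · rw [h₃, Sym2.eq_iff] at hf; tauto
  have haS : a ∉ S := by
    intro h
    rcases hinner' h₄ x a hh4 hx h with rfl | rfl | rfl
    · rw [h₁, Sym2.eq_iff] at hh4; tauto
    · rw [h₂, Sym2.eq_iff] at hh4; tauto
    · rw [h₃, Sym2.eq_iff] at hh4; tauto
  obtain ⟨K, haK, hKo, hKS, hK3, hKcl⟩ := hcomp a haS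
  have hbK : b ∈ K := by
    by_contra h
    exact hbS (hKcl h₅ a b hh5 haK h)
  have hSK : ∀ z ∈ S, z ∉ K := fun z hz h => Finset.disjoint_left.1 hKS h hz
  have hxK := hSK x hx
  have hvK := hSK v hv
  have hfK : f ∈ Mg.dl ends K := Mg.mem_dl.2 ⟨b, v, hbK, hvK, by rw [hf, Sym2.eq_swap]⟩
  have h4K : h₄ ∈ Mg.dl ends K := Mg.mem_dl.2 ⟨a, x, haK, hxK, by rw [hh4, Sym2.eq_swap]⟩
  have hf4 : f ≠ h₄ := by
    rintro rfl; rw [hf, Sym2.eq_iff] at hh4; tauto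
  have hf5 : f ≠ h₅ := by
    rintro rfl; rw [hf, Sym2.eq_iff] at hh5
    rcases hh5 with ⟨h, -⟩ | ⟨h, -⟩
    · exact hav h.symm
    · exact hvK (h ▸ hbK)
  have h45 : h₄ ≠ h₅ := by
    rintro rfl; rw [hh4, Sym2.eq_iff] at hh5
    rcases hh5 with ⟨h, -⟩ | ⟨h, -⟩
    · exact hax h.symm
    · exact hbx h.symm
  obtain ⟨N, hN, h5N⟩ := Mg.schonberger hl hc hb h₅
  have hfN : f ∉ N := fun h => hf5 ((hN b).unique ⟨h, by simp [hf]⟩ ⟨h5N, by simp [hh5]⟩)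
  have h4N : h₄ ∉ N := fun h => h45 ((hN a).unique ⟨h, by simp [hh4]⟩ ⟨h5N, by simp [hh5]⟩)
  obtain ⟨g, hgN, hgK⟩ := Mg.pm_parity hl hN hKo
  have hfg : f ≠ g := by rintro rfl; exact hfN hgN
  have h4g : h₄ ≠ g := by rintro rfl; exact h4N hgN
  have hdl : Mg.dl ends K = {f, h₄, g} := by
    symm
    apply Finset.eq_of_subset_of_card_le
    · intro z hz
      simp only [Finset.mem_insert, Finset.mem_singleton] at hz
      rcases hz with rfl | rfl | rfl <;> assumption
    · rw [hK3, Finset.card_eq_three.2 ⟨_, _, _, hf4, hfg, h4g, rfl⟩]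
  have hcut : ∀ e c d, ends e = s(c, d) → c ∈ K → d ∉ K → e ∉ N → e = f ∨ e = h₄ := by
    intro e c d hcd hc' hd he
    have : e ∈ Mg.dl ends K := Mg.mem_dl.2 ⟨c, d, hc', hd, hcd⟩
    rw [hdl] at this
    simp only [Finset.mem_insert, Finset.mem_singleton] at this
    rcases this with h | h | h
    · exact Or.inl h
    · exact Or.inr h
    · subst h; exact absurd hgN he
  obtain ⟨k, c, hkN, hk4, hk⟩ := Mg.other hc hN a h₄
  have hk5 : k ≠ h₅ := by rintro rfl; exact hkN h5N
  have hcK : c ∈ K := by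
    by_contra h
    rcases hcut k a c hk haK h hkN with rfl | rfl
    · rw [hf, Sym2.eq_iff] at hk
      rcases hk with ⟨h, -⟩ | ⟨-, h⟩
      · exact hav h.symm
      · exact hab h.symm
    · exact hk4 rfl
  obtain ⟨j, y, hjN, hj4, hj⟩ := Mg.other hc hN x h₄
  obtain ⟨t, j₂, j₃, hj2N, hj3N, hj2, hj3, htc, hta, htx, hty, hcx, hcy, hay⟩ :=
    Mg.path5 hl hc h5 hN (p₁ := c) (p₂ := a) (p₃ := x) (p₄ := y) (by rw [hk, Sym2.eq_swap])
      (by rw [hh4, Sym2.eq_swap]) hj hkN h4N hjN hk4 hj4.symm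
  have hyK : y ∉ K := by
    intro h
    rcases hcut j y x (by rw [hj, Sym2.eq_swap]) h hxK hjN with rfl | rfl
    · rw [hf, Sym2.eq_iff] at hj; tauto
    · exact hj4 rfl
  have htK : t ∉ K := by
    intro h
    rcases hcut j₂ t y (by rw [hj2, Sym2.eq_swap]) h hyK hj2N with rfl | rfl
    · rw [hf, Sym2.eq_iff] at hj2
      rcases hj2 with ⟨h, -⟩ | ⟨-, h⟩
      · exact hxv j (by rw [hj, h])
      · exact hyK (h ▸ hbK)
    · rw [hh4, Sym2.eq_iff] at hj2
      rcases hj2 with ⟨-, h⟩ | ⟨h, -⟩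
      · exact hta h.symm
      · exact htx h.symm
  have hcb : c = b := by
    rcases hcut j₃ c t (by rw [hj3, Sym2.eq_swap]) hcK htK hj3N with rfl | rfl
    · rw [hf, Sym2.eq_iff] at hj3
      rcases hj3 with ⟨-, h⟩ | ⟨-, h⟩
      · exact h.symm
      · exact absurd (h ▸ hbK) htK
    · rw [hh4, Sym2.eq_iff] at hj3
      rcases hj3 with ⟨h, -⟩ | ⟨-, h⟩
      · exact absurd h.symm htx
      · exact absurd h.symm hta
  subst hcb
  -- now a and c are joined by a double edge
  have hfk : f ≠ k := by
    rintro rfl; rw [hf, Sym2.eq_iff] at hk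
    rcases hk with ⟨h, -⟩ | ⟨h, -⟩
    · exact hav h.symm
    · exact hvK (h ▸ hcK)
  have hpair : ({a, c} : Finset V) ⊆ K := by
    intro z hz
    simp only [Finset.mem_insert, Finset.mem_singleton] at hz
    rcases hz with rfl | rfl <;> assumption
  have hodd : Odd (K \ {a, c}).card := by
    rw [Finset.card_sdiff_of_subset hpair, Finset.card_pair hab]
    have := Finset.card_le_card hpair
    rw [Finset.card_pair hab] at this
    rw [Nat.odd_iff] at hKo ⊢
    omega
  have h3 := Mg.three_le hl hc hb hodd
  have hsub : Mg.dl ends (K \ {a, c}) ⊆ {g} := by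
    intro e he
    obtain ⟨p, q, hp, hq, hpq⟩ := Mg.mem_dl.1 he
    simp only [Finset.mem_sdiff, Finset.mem_insert, Finset.mem_singleton, not_or, not_and,
      not_not] at hp hq
    obtain ⟨hpK, hpa, hpc⟩ := hp
    have nf : e ≠ f := by
      rintro rfl
      rw [hf, Sym2.eq_iff] at hpq
      rcases hpq with ⟨h, -⟩ | ⟨-, h⟩
      · exact hvK (h ▸ hpK)
      · exact hpc h.symm
    have n4 : e ≠ h₄ := by
      rintro rfl
      rw [hh4, Sym2.eq_iff] at hpq
      rcases hpq with ⟨h, -⟩ | ⟨-, h⟩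
      · exact hxK (h ▸ hpK)
      · exact hpa h.symm
    have n5 : e ≠ h₅ := by
      rintro rfl
      rw [hh5, Sym2.eq_iff] at hpq
      rcases hpq with ⟨h, -⟩ | ⟨-, h⟩
      · exact hpa h.symm
      · exact hpc h.symm
    have nk : e ≠ k := by
      rintro rfl
      rw [hk, Sym2.eq_iff] at hpq
      rcases hpq with ⟨h, -⟩ | ⟨-, h⟩
      · exact hpa h.symm
      · exact hpc h.symm
    have hqa : q ≠ a := by
      rintro rfl
      rcases Mg.edges3 hc (p := q) (f := h₄) (g := h₅) (k := k) (e := e) (by simp [hh4])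
        (by simp [hh5]) (by simp [hk]) (by simp [hpq]) h45 hk4.symm hk5.symm with h | h | h <;> tauto
    have hqc : q ≠ c := by
      rintro rfl
      rcases Mg.edges3 hc (p := q) (f := f) (g := h₅) (k := k) (e := e) (by simp [hf])
        (by simp [hh5]) (by simp [hk]) (by simp [hpq]) hf5 hfk hk5.symm with h | h | h <;> tauto
    have hqK : q ∉ K := fun h => hqc (hq h hqa)
    have : e ∈ Mg.dl ends K := Mg.mem_dl.2 ⟨p, q, hpK, hqK, hpq⟩
    rw [hdl] at this
    simp only [Finset.mem_insert, Finset.mem_singleton] at this ⊢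
    tauto
  have := Finset.card_le_card hsub
  simp at this
  omega
end

section
/- Let G be a connected bridgeless cubic graph in which every 2-factor consists only of 5-cycles. Then every path of length two in G is contained in at least two distinct cycles of length five. -/
set_option linter.unusedSectionVars false

namespace Pet

lemma zmod_five : ∀ i j : ZMod 5, i = j + 1 → i + 1 = j → False := by decide

open Finset
open scoped Classical

variable {V E : Type} [Fintype V] [Fintype E]

/-- Number of ends of `e` in `Z`. -/
noncomputable def cnt (ends : E → Sym2 V) (Z : Finset V) (e : E) : ℕ :=
  (Z.filter (fun v => v ∈ ends e)).card

/-- Edge cut of `Z`. -/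
noncomputable def cut (ends : E → Sym2 V) (Z : Finset V) : Finset E :=
  univ.filter (fun e => ∃ a ∈ Z, ∃ b, b ∉ Z ∧ ends e = s(a, b))

/-- Edges of `F` at `v`. -/
noncomputable def inc (ends : E → Sym2 V) (F : Finset E) (v : V) : Finset E :=
  F.filter (fun e => v ∈ ends e)

lemma card_filter_eq {Z : Finset V} {a : V} (h : a ∈ Z) : (Z.filter (fun v => v = a)).card = 1 := by
  rw [Finset.card_eq_one]
  refine ⟨a, ?_⟩
  ext x
  simp only [mem_filter, mem_singleton]
  exact ⟨fun hx => hx.2, fun hx => ⟨hx ▸ h, hx⟩⟩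

lemma cnt_eq {ends : E → Sym2 V} (Z : Finset V) {e : E} {a b : V} (h : ends e = s(a, b))
    (hab : a ≠ b) : cnt ends Z e = (if a ∈ Z then 1 else 0) + (if b ∈ Z then 1 else 0) := by
  unfold cnt
  have : Z.filter (fun v => v ∈ ends e) = Z.filter (fun v => v = a) ∪ Z.filter (fun v => v = b) := by
    ext v; simp [h]; tauto
  rw [this, card_union_of_disjoint]
  · congr 1
    · by_cases ha : a ∈ Z <;> simp [ha, card_filter_eq]
    · by_cases ha : b ∈ Z <;> simp [ha, card_filter_eq]
  · rw [Finset.disjoint_left]; intro x; simp; intro _ h1 _ h2; exact hab (h1 ▸ h2)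

lemma ex_ends {ends : E → Sym2 V} (hl : Mg.NoLoops ends) (e : E) :
    ∃ a b, ends e = s(a, b) ∧ a ≠ b := by
  have := hl e
  revert this
  generalize ends e = p
  induction p using Sym2.ind with
  | _ a b => intro h; exact ⟨a, b, rfl, by simpa using h⟩

lemma other_end {ends : E → Sym2 V} (hl : Mg.NoLoops ends) {e : E} {a : V} (h : a ∈ ends e) :
    ∃ b, ends e = s(a, b) ∧ a ≠ b := by
  obtain ⟨b, hb⟩ := Sym2.mem_iff_exists.1 h
  refine ⟨b, hb, fun hab => hl e ?_⟩
  rw [hb, hab]; simp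

lemma sum_deg (ends : E → Sym2 V) (Z : Finset V) (F : Finset E) :
    ∑ v ∈ Z, (inc ends F v).card = ∑ e ∈ F, cnt ends Z e := by
  exact Finset.sum_card_bipartiteAbove_eq_sum_card_bipartiteBelow (fun v e => v ∈ ends e)

lemma mem_cut {ends : E → Sym2 V} {Z : Finset V} {e : E} :
    e ∈ cut ends Z ↔ ∃ a ∈ Z, ∃ b, b ∉ Z ∧ ends e = s(a, b) := by simp [cut]

lemma cnt_mod {ends : E → Sym2 V} (hl : Mg.NoLoops ends) (Z : Finset V) (e : E) :
    cnt ends Z e % 2 = if e ∈ cut ends Z then 1 else 0 := by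
  obtain ⟨a, b, h, hab⟩ := ex_ends hl e
  rw [cnt_eq Z h hab]
  have : e ∈ cut ends Z ↔ ((a ∈ Z ∧ b ∉ Z) ∨ (b ∈ Z ∧ a ∉ Z)) := by
    rw [mem_cut]
    constructor
    · rintro ⟨x, hx, y, hy, hh⟩
      rw [h] at hh
      rcases Sym2.eq_iff.1 hh with ⟨rfl, rfl⟩ | ⟨rfl, rfl⟩ <;> tauto
    · rintro (⟨h1, h2⟩ | ⟨h1, h2⟩)
      · exact ⟨a, h1, b, h2, h⟩
      · exact ⟨b, h1, a, h2, by rw [h, Sym2.eq_swap]⟩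
  by_cases ha : a ∈ Z <;> by_cases hb : b ∈ Z <;> simp [this, ha, hb]

lemma parity {ends : E → Sym2 V} (hl : Mg.NoLoops ends) (Z : Finset V) (F : Finset E) :
    (∑ v ∈ Z, (inc ends F v).card) % 2 = (F ∩ cut ends Z).card % 2 := by
  rw [sum_deg, Finset.sum_nat_mod, Finset.sum_congr rfl (fun e _ => cnt_mod hl Z e)]
  congr 1
  rw [← Finset.card_filter, Finset.filter_mem_eq_inter]

lemma cubic_card {ends : E → Sym2 V} (hc : Mg.IsCubic ends) (v : V) :
    (inc ends univ v).card = 3 := by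
  rw [← hc v, ← Set.ncard_coe_finset]; congr 1; ext e; simp [inc]

lemma cubic_parity {ends : E → Sym2 V} (hl : Mg.NoLoops ends) (hc : Mg.IsCubic ends)
    (Z : Finset V) : (cut ends Z).card % 2 = Z.card % 2 := by
  have := parity hl Z univ
  rw [Finset.sum_congr rfl (fun v _ => cubic_card hc v)] at this
  simp at this; omega

lemma even_V {ends : E → Sym2 V} (hl : Mg.NoLoops ends) (hc : Mg.IsCubic ends) :
    Fintype.card V % 2 = 0 := by
  have := cubic_parity hl hc (univ : Finset V)
  rw [Finset.card_univ] at this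
  rw [← this]
  have : cut ends (univ : Finset V) = ∅ := by ext e; simp [mem_cut]
  simp [this]

lemma reach_closed {ends : E → Sym2 V} {F : Set E} {Z : Set V}
    (h : ∀ e ∈ F, ∀ a b, ends e = s(a, b) → a ∈ Z → b ∈ Z) {x y : V}
    (hr : Mg.Reach ends F x y) (hx : x ∈ Z) : y ∈ Z := by
  induction hr with
  | refl => exact hx
  | tail _ h2 ih => obtain ⟨e, he, hh⟩ := h2; exact h e he _ _ hh ih

lemma reach_symm {ends : E → Sym2 V} {F : Set E} {x y : V}
    (hr : Mg.Reach ends F x y) : Mg.Reach ends F y x := by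
  induction hr with
  | refl => exact Relation.ReflTransGen.refl
  | tail _ h2 ih =>
    obtain ⟨e, he, h⟩ := h2
    exact Relation.ReflTransGen.head ⟨e, he, by rw [h, Sym2.eq_swap]⟩ ih

lemma cut_nonempty {ends : E → Sym2 V} (hconn : Mg.Connected ends) {Z : Finset V}
    (h : cut ends Z = ∅) (hZ : Z.Nonempty) (v : V) : v ∈ Z := by
  obtain ⟨z, hz⟩ := hZ
  refine reach_closed (Z := (Z : Set V)) ?_ (hconn z v) hz
  intro e _ a b hab ha
  by_contra hb
  have : e ∈ cut ends Z := mem_cut.2 ⟨a, ha, b, hb, hab⟩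
  simp [h] at this

lemma cut_ge_three {ends : E → Sym2 V} (hl : Mg.NoLoops ends) (hc : Mg.IsCubic ends)
    (hb : Mg.Bridgeless ends) {Z : Finset V} (hZ : Odd Z.card) : 3 ≤ (cut ends Z).card := by
  have hp := cubic_parity hl hc Z
  rw [Nat.odd_iff] at hZ
  by_contra hlt
  have h1 : (cut ends Z).card = 1 := by omega
  obtain ⟨e, he⟩ := Finset.card_eq_one.1 h1
  have hee : e ∈ cut ends Z := by simp [he]
  obtain ⟨a, ha, b, hbZ, hab⟩ := mem_cut.1 hee
  refine hbZ (reach_closed (Z := (Z : Set V)) ?_ (hb e a b hab) ha)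
  intro f hf x y hxy hx
  by_contra hy
  have : f ∈ cut ends Z := mem_cut.2 ⟨x, hx, y, hy, hxy⟩
  rw [he] at this
  exact hf (by simpa using this)

/-- The simple graph of edges outside `D`. -/
def sg (ends : E → Sym2 V) (hl : Mg.NoLoops ends) (D : Finset E) : SimpleGraph V where
  Adj a b := ∃ e, e ∉ D ∧ ends e = s(a, b)
  symm := ⟨fun a b ⟨e, he, h⟩ => ⟨e, he, by rw [h, Sym2.eq_swap]⟩⟩
  loopless := ⟨fun a ⟨e, _, h⟩ => hl e (by rw [h]; simp)⟩

/-- Either there is a 2-factor containing `D`, or a Tutte barrier. -/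
lemma tutte_alt {ends : E → Sym2 V} (hl : Mg.NoLoops ends) (hc : Mg.IsCubic ends)
    (D : Finset E) :
    (∃ F : Finset E, D ⊆ F ∧ ∀ v, (inc ends F v).card = 2) ∨
    ∃ (S : Finset V) (P : Finset (Finset V)), S.card + 2 ≤ P.card ∧
      (∀ O ∈ P, Odd O.card) ∧ (∀ O ∈ P, Disjoint O S) ∧
      (∀ O ∈ P, ∀ O' ∈ P, ∀ v, v ∈ O → v ∈ O' → O = O') ∧
      (∀ O ∈ P, ∀ e, e ∉ D → ∀ a b, ends e = s(a, b) → a ∈ O → b ∉ O → b ∈ S) := by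
  by_cases hpm : ∃ M : (sg ends hl D).Subgraph, M.IsPerfectMatching
  · left
    obtain ⟨M, hM⟩ := hpm
    rw [SimpleGraph.Subgraph.isPerfectMatching_iff] at hM
    have hch : ∀ p ∈ M.edgeSet, ∃ e, e ∉ D ∧ ends e = p := by
      intro p
      induction p using Sym2.ind with
      | _ a b => intro h; exact M.adj_sub (by simpa using h)
    rcases isEmpty_or_nonempty V with hV | ⟨⟨v0⟩⟩
    · exact ⟨D, subset_rfl, fun v => hV.elim v⟩
    obtain ⟨w0, hw0, -⟩ := hM v0
    obtain ⟨e0, -⟩ := M.adj_sub hw0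
    have : Nonempty E := ⟨e0⟩
    choose! g hg using hch
    let F : Finset E := univ.filter (fun e => ¬ ∃ p ∈ M.edgeSet, g p = e)
    refine ⟨F, ?_, ?_⟩
    · intro e he
      simp only [F, mem_filter, mem_univ, true_and]
      rintro ⟨p, hp, rfl⟩
      exact (hg p hp).1 he
    · intro v
      obtain ⟨w, hw, huw⟩ := hM v
      have hmem : s(v, w) ∈ M.edgeSet := by simpa using hw
      have h1 : inc ends F v = (inc ends univ v).erase (g s(v, w)) := by
        ext e
        simp only [inc, F, mem_filter, mem_univ, true_and, mem_erase]
        constructor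
        · rintro ⟨h1, h2⟩
          exact ⟨fun h => h1 ⟨_, hmem, h.symm⟩, h2⟩
        · rintro ⟨h1, h2⟩
          refine ⟨?_, h2⟩
          rintro ⟨p, hp, rfl⟩
          rw [(hg p hp).2] at h2
          obtain ⟨x, rfl⟩ := Sym2.mem_iff_exists.1 h2
          have := huw x (by simpa using hp)
          subst this
          exact h1 rfl
      rw [h1, Finset.card_erase_of_mem, cubic_card hc]
      simp [inc, (hg _ hmem).2]
  · right
    rw [SimpleGraph.tutte] at hpm
    push Not at hpm
    obtain ⟨u, hu⟩ := hpm
    unfold SimpleGraph.IsTutteViolator at hu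
    set H := ((⊤ : (sg ends hl D).Subgraph).deleteVerts u).coe with hH
    let φ : H.ConnectedComponent → Finset V := fun C => (Subtype.val '' C.supp).toFinset
    have hmemφ : ∀ C v, v ∈ φ C ↔ ∃ h, (⟨v, h⟩ : ((⊤ : (sg ends hl D).Subgraph).deleteVerts u).verts) ∈ C.supp := by
      intro C v; simp [φ]
    have hφ : ∀ C C' : H.ConnectedComponent, ∀ v, v ∈ φ C → v ∈ φ C' → C = C' := by
      intro C C' v h1 h2
      rw [hmemφ] at h1 h2
      obtain ⟨_, h1⟩ := h1
      obtain ⟨_, h2⟩ := h2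
      exact SimpleGraph.ConnectedComponent.eq_of_common_vertex h1 h2
    have hne : ∀ C, (φ C).Nonempty := by
      intro C
      obtain ⟨x, hx⟩ := C.nonempty_supp
      exact ⟨x, (hmemφ _ _).2 ⟨x.2, hx⟩⟩
    have hinj : Function.Injective φ := by
      intro C C' h
      obtain ⟨x, hx⟩ := hne C
      exact hφ C C' x hx (h ▸ hx)
    have hcard : ∀ C, (φ C).card = C.supp.ncard := by
      intro C
      rw [← Set.ncard_eq_toFinset_card', Set.ncard_image_of_injective _ Subtype.val_injective]
    refine ⟨u.toFinset, (H.oddComponents.toFinset).image φ, ?_, ?_, ?_, ?_, ?_⟩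
    · rw [Finset.card_image_of_injective _ hinj, ← Set.ncard_eq_toFinset_card', ← Set.ncard_eq_toFinset_card']
      have h1 := SimpleGraph.odd_ncard_oddComponents H
      have h2 : Nat.card ((⊤ : (sg ends hl D).Subgraph).deleteVerts u).verts + u.ncard = Fintype.card V := by
        have : ((⊤ : (sg ends hl D).Subgraph).deleteVerts u).verts = uᶜ := by
          ext; simp
        rw [this, Nat.card_coe_set_eq, add_comm, Set.ncard_add_ncard_compl, Nat.card_eq_fintype_card]
      have h3 := even_V hl hc
      rw [Nat.odd_iff, Nat.odd_iff] at h1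
      change u.ncard < H.oddComponents.ncard at hu
      by_contra hlt
      have : H.oddComponents.ncard = u.ncard + 1 := by omega
      omega
    · intro O hO
      simp only [mem_image, Set.mem_toFinset] at hO
      obtain ⟨C, hC, rfl⟩ := hO
      rw [hcard]; exact hC
    · intro O hO
      simp only [mem_image, Set.mem_toFinset] at hO
      obtain ⟨C, hC, rfl⟩ := hO
      rw [Finset.disjoint_left]
      intro v hv hvu
      obtain ⟨h, -⟩ := (hmemφ _ _).1 hv
      exact h.2 (by simpa using hvu)
    · intro O hO O' hO' v hv hv'
      simp only [mem_image, Set.mem_toFinset] at hO hO'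
      obtain ⟨C, hC, rfl⟩ := hO
      obtain ⟨C', hC', rfl⟩ := hO'
      rw [hφ C C' v hv hv']
    · intro O hO e he a b hab ha hb
      simp only [mem_image, Set.mem_toFinset] at hO
      obtain ⟨C, hC, rfl⟩ := hO
      by_contra hbu
      obtain ⟨h, haC⟩ := (hmemφ _ _).1 ha
      have hbv : b ∈ ((⊤ : (sg ends hl D).Subgraph).deleteVerts u).verts := by
        refine ⟨trivial, by simpa using hbu⟩
      apply hb
      rw [hmemφ]
      refine ⟨hbv, SimpleGraph.ConnectedComponent.mem_supp_of_adj_mem_supp C haC ?_⟩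
      rw [hH, SimpleGraph.Subgraph.coe_adj, SimpleGraph.Subgraph.deleteVerts_adj]
      exact ⟨trivial, h.2, trivial, hbv.2, e, he, hab⟩

/-- Pointwise count bound. -/
lemma barrier_pt {ends : E → Sym2 V} (hl : Mg.NoLoops ends) {D : Finset E}
    {S : Finset V} {P : Finset (Finset V)} (_hdS : ∀ O ∈ P, Disjoint O S)
    (hdP : ∀ O ∈ P, ∀ O' ∈ P, ∀ v, v ∈ O → v ∈ O' → O = O')
    (hcl : ∀ O ∈ P, ∀ e, e ∉ D → ∀ a b, ends e = s(a, b) → a ∈ O → b ∉ O → b ∈ S) (e : E) :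
    (P.filter (fun O => e ∈ cut ends O)).card ≤ cnt ends S e + if e ∈ D then 2 else 0 := by
  obtain ⟨a, b, hab, hne⟩ := ex_ends hl e
  have hA : ∀ x : V, (P.filter (fun O => x ∈ O)).card ≤ 1 := by
    intro x
    rw [Finset.card_le_one]
    intro O hO O' hO'
    simp only [mem_filter] at hO hO'
    exact hdP O hO.1 O' hO'.1 x hO.2 hO'.2
  have hsub : P.filter (fun O => e ∈ cut ends O) ⊆
      P.filter (fun O => a ∈ O) ∪ P.filter (fun O => b ∈ O) := by
    intro O
    simp only [mem_filter, mem_union, mem_cut]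
    rintro ⟨hO, x, hx, y, hy, hxy⟩
    rw [hab] at hxy
    rcases Sym2.eq_iff.1 hxy with ⟨rfl, rfl⟩ | ⟨rfl, rfl⟩ <;> tauto
  have h2 := (Finset.card_le_card hsub).trans (Finset.card_union_le _ _)
  have ha1 := hA a
  have hb1 := hA b
  by_cases heD : e ∈ D
  · simp only [heD, if_true]; omega
  simp only [heD, if_false, add_zero]
  rw [cnt_eq S hab hne]
  have key : ∀ x y, ends e = s(x, y) → ∀ O ∈ P, x ∈ O → e ∈ cut ends O → y ∈ S := by
    intro x y hxy O hO hx hcut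
    obtain ⟨p, hp, q, hq, hpq⟩ := mem_cut.1 hcut
    rw [hxy] at hpq
    rcases Sym2.eq_iff.1 hpq with ⟨rfl, rfl⟩ | ⟨rfl, rfl⟩
    · exact hcl O hO e heD _ _ hxy hp hq
    · exact absurd hx hq
  have hsub1 : P.filter (fun O => e ∈ cut ends O) ⊆
      (if b ∈ S then P.filter (fun O => a ∈ O) else ∅) ∪
      (if a ∈ S then P.filter (fun O => b ∈ O) else ∅) := by
    intro O hO
    have hO2 := hsub hO
    simp only [mem_filter] at hO
    simp only [mem_union, mem_filter] at hO2
    rcases hO2 with ⟨h, h'⟩ | ⟨h, h'⟩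
    · have := key a b hab O h h' hO.2
      simp [this, h, h']
    · have := key b a (by rw [hab, Sym2.eq_swap]) O h h' hO.2
      simp [this, h, h']
  have h3 := (Finset.card_le_card hsub1).trans (Finset.card_union_le _ _)
  by_cases ha : a ∈ S <;> by_cases hb : b ∈ S <;>
    simp only [ha, hb, if_true, if_false, Finset.card_empty] at h3 ⊢ <;> omega

lemma barrier_sum {ends : E → Sym2 V} (hc : Mg.IsCubic ends) {D : Finset E}
    {S : Finset V} : ∑ e, (cnt ends S e + if e ∈ D then 2 else 0) = 3 * S.card + 2 * D.card := by
  rw [Finset.sum_add_distrib, ← sum_deg, Finset.sum_congr rfl (fun v _ => cubic_card hc v)]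
  simp [mul_comm]

lemma barrier_dc {ends : E → Sym2 V} (P : Finset (Finset V)) :
    ∑ O ∈ P, (cut ends O).card = ∑ e, (P.filter (fun O => e ∈ cut ends O)).card := by
  refine Eq.trans ?_
    (Finset.sum_card_bipartiteAbove_eq_sum_card_bipartiteBelow (fun O e => e ∈ cut ends O))
  refine Finset.sum_congr rfl fun O _ => ?_
  congr 1; ext e; simp [Finset.bipartiteAbove]

lemma two_factor_pair {ends : E → Sym2 V} (hl : Mg.NoLoops ends) (hc : Mg.IsCubic ends)
    (hb : Mg.Bridgeless ends) (e f : E) :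
    ∃ F : Finset E, e ∈ F ∧ f ∈ F ∧ ∀ v, (inc ends F v).card = 2 := by
  rcases tutte_alt hl hc {e, f} with ⟨F, h1, h2⟩ | ⟨S, P, hk, hodd, hdS, hdP, hcl⟩
  · exact ⟨F, h1 (by simp), h1 (by simp), h2⟩
  exfalso
  have h1 := Finset.sum_le_sum (s := univ) (fun e _ => barrier_pt hl hdS hdP hcl e)
  rw [barrier_sum hc, ← barrier_dc] at h1
  have h2 := Finset.sum_le_sum (fun O hO => cut_ge_three hl hc hb (hodd O hO))
  rw [Finset.sum_const, smul_eq_mul] at h2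
  have h3 : ({e, f} : Finset E).card ≤ 2 := Finset.card_le_two
  omega

/-- The hypotheses of the theorem. -/
structure Good (ends : E → Sym2 V) : Prop where
  hl : Mg.NoLoops ends
  hc : Mg.IsCubic ends
  hb : Mg.Bridgeless ends
  hconn : Mg.Connected ends
  h5 : Mg.TwoFactorsAllC5 ends

/-- A 2-factor given as a finset. -/
def TF (ends : E → Sym2 V) (F : Finset E) : Prop := ∀ v, (inc ends F v).card = 2

/-- Component as a finset. -/
noncomputable def comp (ends : E → Sym2 V) (F : Finset E) (v : V) : Finset V :=
  (Mg.component ends (F : Set E) v).toFinset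

lemma mem_inc {ends : E → Sym2 V} {F : Finset E} {v : V} {e : E} :
    e ∈ inc ends F v ↔ e ∈ F ∧ v ∈ ends e := by simp [inc]

lemma comp_card {ends : E → Sym2 V} (G : Good ends) {F : Finset E} (hF : TF ends F) (v : V) :
    (comp ends F v).card = 5 := by
  have h := G.h5 (F : Set E) (fun v => ?_) v
  · rw [← h, comp, Set.ncard_eq_toFinset_card']
  · rw [← hF v, ← Set.ncard_coe_finset]; congr 1; ext e; simp [inc]

lemma mem_comp {ends : E → Sym2 V} {F : Finset E} {v w : V} :
    w ∈ comp ends F v ↔ Mg.Reach ends (F : Set E) v w := by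
  rw [comp, Set.mem_toFinset]; rfl

lemma self_mem_comp (ends : E → Sym2 V) (F : Finset E) (v : V) : v ∈ comp ends F v :=
  mem_comp.2 Relation.ReflTransGen.refl

lemma comp_step {ends : E → Sym2 V} {F : Finset E} {v a b : V} {e : E} (he : e ∈ F)
    (h : ends e = s(a, b)) (ha : a ∈ comp ends F v) : b ∈ comp ends F v :=
  mem_comp.2 (Relation.ReflTransGen.tail (mem_comp.1 ha) ⟨e, he, h⟩)

lemma comp_subset {ends : E → Sym2 V} {F : Finset E} {Z : Finset V}
    (h : ∀ e ∈ F, ∀ a b, ends e = s(a, b) → a ∈ Z → b ∈ Z) {v : V} (hv : v ∈ Z) :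
    comp ends F v ⊆ Z := by
  intro w hw
  exact reach_closed (Z := (Z : Set V)) h (mem_comp.1 hw) hv

lemma closed_five {ends : E → Sym2 V} (G : Good ends) {F : Finset E} (hF : TF ends F) :
    ∀ (n : ℕ) (Z : Finset V), Z.card = n →
    (∀ e ∈ F, ∀ a b, ends e = s(a, b) → a ∈ Z → b ∈ Z) → 5 ∣ Z.card := by
  intro n
  induction n using Nat.strong_induction_on with
  | _ n ih =>
    intro Z hn hZ
    rcases Z.eq_empty_or_nonempty with rfl | ⟨z, hz⟩
    · simp
    have hsub := comp_subset hZ hz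
    have hcard := Finset.card_sdiff_add_card_eq_card hsub
    rw [comp_card G hF] at hcard
    have := ih (Z \ comp ends F z).card (by omega) _ rfl (by
      intro e he a b hab ha
      rw [mem_sdiff] at ha ⊢
      refine ⟨hZ e he a b hab ha.1, fun hb => ha.2 ?_⟩
      exact comp_step he (by rw [hab, Sym2.eq_swap]) hb)
    omega

lemma inc_two {ends : E → Sym2 V} {F : Finset E} (hF : TF ends F) {v : V} {e f g : E}
    (he : e ∈ F) (hf : f ∈ F) (hg : g ∈ F) (hef : e ≠ f) (hev : v ∈ ends e) (hfv : v ∈ ends f)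
    (hgv : v ∈ ends g) : g = e ∨ g = f := by
  by_contra h
  push Not at h
  have hsub : ({g, e, f} : Finset E) ⊆ inc ends F v := by
    intro x hx
    simp only [mem_insert, mem_singleton] at hx
    rw [mem_inc]
    rcases hx with rfl | rfl | rfl <;> tauto
  have := Finset.card_le_card hsub
  rw [hF v, Finset.card_eq_three.2 ⟨g, e, f, h.1, h.2, hef, rfl⟩] at this
  omega

lemma inc_three {ends : E → Sym2 V} (hc : Mg.IsCubic ends) {v : V} {e f g h : E}
    (hef : e ≠ f) (heg : e ≠ g) (hfg : f ≠ g) (hev : v ∈ ends e) (hfv : v ∈ ends f)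
    (hgv : v ∈ ends g) (hhv : v ∈ ends h) : h = e ∨ h = f ∨ h = g := by
  have hsub : ({e, f, g} : Finset E) ⊆ inc ends univ v := by
    intro x hx
    simp only [mem_insert, mem_singleton] at hx
    rw [mem_inc]
    rcases hx with rfl | rfl | rfl <;> simp_all
  have heq := Finset.eq_of_subset_of_card_le hsub (by
    rw [cubic_card hc, Finset.card_eq_three.2 ⟨e, f, g, hef, heg, hfg, rfl⟩])
  have : h ∈ inc ends univ v := mem_inc.2 ⟨mem_univ _, hhv⟩
  rw [← heq] at this
  simpa using this

lemma ex_other {ends : E → Sym2 V} {F : Finset E} (hF : TF ends F) (v : V) (e : E) :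
    ∃ g ∈ F, g ≠ e ∧ v ∈ ends g := by
  have h : 1 < (inc ends F v).card := by rw [hF v]; omega
  obtain ⟨g, hg, hne⟩ := Finset.exists_mem_ne h e
  rw [mem_inc] at hg
  exact ⟨g, hg.1, hne, hg.2⟩

lemma ends_inj {ends : E → Sym2 V} (G : Good ends) {e f : E} (h : ends e = ends f) : e = f := by
  by_contra hne
  obtain ⟨F, he, hf, hF⟩ := two_factor_pair G.hl G.hc G.hb e f
  obtain ⟨a, b, hab, hn⟩ := ex_ends G.hl e
  have hsub : comp ends F a ⊆ {a, b} := by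
    refine comp_subset ?_ (by simp)
    intro g hg x y hxy hx
    have hxe : x ∈ ends e := by rw [hab]; simpa using hx
    have hxg : x ∈ ends g := by rw [hxy]; simp
    have hg2 : ends g = s(a, b) := by
      rcases inc_two hF he hf hg hne hxe (h ▸ hxe) hxg with rfl | rfl
      · exact hab
      · rw [← h, hab]
    have : y ∈ ends g := by rw [hxy]; simp
    rw [hg2] at this
    simpa using this
  have := Finset.card_le_card hsub
  rw [comp_card G hF] at this
  have h2 : ({a, b} : Finset V).card ≤ 2 := Finset.card_le_two
  omega

lemma cut_end_unique {ends : E → Sym2 V} {X : Finset V} {e : E} (he : e ∈ cut ends X) {x y : V}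
    (hx : x ∈ X) (hy : y ∈ X) (hxe : x ∈ ends e) (hye : y ∈ ends e) : x = y := by
  obtain ⟨a, ha, b, hb, hab⟩ := mem_cut.1 he
  rw [hab] at hxe hye
  rcases Sym2.mem_iff.1 hxe with rfl | rfl <;> rcases Sym2.mem_iff.1 hye with rfl | rfl <;>
    first | rfl | contradiction

lemma cut_compl (ends : E → Sym2 V) (X : Finset V) : cut ends Xᶜ = cut ends X := by
  ext e
  rw [mem_cut, mem_cut]
  constructor
  · rintro ⟨a, ha, b, hb, h⟩
    exact ⟨b, by simpa using hb, a, by simpa using ha, by rw [h, Sym2.eq_swap]⟩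
  · rintro ⟨a, ha, b, hb, h⟩
    exact ⟨b, by simpa using hb, a, by simpa using ha, by rw [h, Sym2.eq_swap]⟩

lemma cut_count {ends : E → Sym2 V} (G : Good ends) {X : Finset V} {e₁ e₂ e₃ : E}
    (hX : cut ends X = {e₁, e₂, e₃}) (h12 : e₁ ≠ e₂) (h13 : e₁ ≠ e₃) (h23 : e₂ ≠ e₃)
    {x₁ x₂ : V} (hx1 : x₁ ∈ X) (hx2 : x₂ ∈ X) (h1 : x₁ ∈ ends e₁) (h2 : x₂ ∈ ends e₂) :
    ∃ F, TF ends F ∧ e₁ ∈ F ∧ e₂ ∈ F ∧ e₃ ∉ F ∧ x₂ ∈ comp ends F x₁ ∧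
      (comp ends F x₁ ∩ X).card % 5 = X.card % 5 ∧ (comp ends F x₁ ∩ X).card < 5 := by
  obtain ⟨F, he1, he2, hF⟩ := two_factor_pair G.hl G.hc G.hb e₁ e₂
  have hpar : ∀ Z : Finset V, (F ∩ cut ends Z).card % 2 = 0 := by
    intro Z
    rw [← parity G.hl, Finset.sum_congr rfl (fun v _ => hF v)]
    simp
  have c1 : e₁ ∈ cut ends X := by simp [hX]
  have c2 : e₂ ∈ cut ends X := by simp [hX]
  have he3 : e₃ ∉ F := by
    intro he3
    have h := hpar X
    have : F ∩ cut ends X = {e₁, e₂, e₃} := by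
      rw [hX, Finset.inter_eq_right]
      intro x hx
      simp only [mem_insert, mem_singleton] at hx
      rcases hx with rfl | rfl | rfl <;> assumption
    rw [this, Finset.card_eq_three.2 ⟨_, _, _, h12, h13, h23, rfl⟩] at h
    omega
  have hcF : ∀ e ∈ F, e ∈ cut ends X → e = e₁ ∨ e = e₂ := by
    intro e he hec
    rw [hX] at hec
    simp only [mem_insert, mem_singleton] at hec
    rcases hec with rfl | rfl | rfl
    · left; rfl
    · right; rfl
    · contradiction
  obtain ⟨y, hy, -⟩ := other_end G.hl h1
  have hyX : y ∉ X := fun hyX => by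
    obtain ⟨a, ha, b, hb, hab⟩ := mem_cut.1 c1
    rw [hy] at hab
    rcases Sym2.eq_iff.1 hab with ⟨rfl, rfl⟩ | ⟨rfl, rfl⟩ <;> contradiction
  set C := comp ends F x₁ with hC
  have hxC : x₁ ∈ C := self_mem_comp _ _ _
  have hyC : y ∈ C := comp_step he1 hy hxC
  have hx2C : x₂ ∈ C := by
    have h := hpar (C ∩ X)
    have hin : e₁ ∈ F ∩ cut ends (C ∩ X) := by
      rw [mem_inter, mem_cut]
      exact ⟨he1, x₁, by simp [hxC, hx1], y, by simp [hyX], hy⟩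
    have hpos := Finset.card_pos.2 ⟨_, hin⟩
    obtain ⟨g, hg, hne⟩ := Finset.exists_mem_ne (by omega : 1 < (F ∩ cut ends (C ∩ X)).card) e₁
    rw [mem_inter, mem_cut] at hg
    obtain ⟨hgF, a, ha, b, hb, hab⟩ := hg
    rw [mem_inter] at ha hb
    have hbC : b ∈ C := comp_step hgF hab ha.1
    have hgc : g ∈ cut ends X := mem_cut.2 ⟨a, ha.2, b, fun hh => hb ⟨hbC, hh⟩, hab⟩
    have hg2 : g = e₂ := (hcF g hgF hgc).resolve_left hne
    subst hg2
    have : a = x₂ := cut_end_unique hgc ha.2 hx2 (by rw [hab]; simp) h2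
    exact this ▸ ha.1
  refine ⟨F, hF, he1, he2, he3, hx2C, ?_, ?_⟩
  · have h5 : 5 ∣ (X \ C).card := by
      refine closed_five G hF _ _ rfl ?_
      intro e he a b hab ha
      rw [mem_sdiff] at ha ⊢
      constructor
      · by_contra hbX
        have hec : e ∈ cut ends X := mem_cut.2 ⟨a, ha.1, b, hbX, hab⟩
        have hae : a ∈ ends e := by rw [hab]; simp
        rcases hcF e he hec with rfl | rfl
        · exact ha.2 (cut_end_unique hec ha.1 hx1 hae h1 ▸ hxC)
        · exact ha.2 (cut_end_unique hec ha.1 hx2 hae h2 ▸ hx2C)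
      · intro hb
        exact ha.2 (comp_step he (by rw [hab, Sym2.eq_swap]) hb)
    have := Finset.card_sdiff_add_card_inter X C
    rw [Finset.inter_comm X C] at this
    change (C ∩ X).card % 5 = _
    omega
  · rw [← comp_card G hF x₁]
    refine Finset.card_lt_card ⟨Finset.inter_subset_left, fun h => hyX ?_⟩
    exact (mem_inter.1 (h hyC)).2

lemma cut_two {ends : E → Sym2 V} (G : Good ends) {X : Finset V} {e₁ e₂ e₃ : E}
    (hX : cut ends X = {e₁, e₂, e₃}) (h12 : e₁ ≠ e₂) (h13 : e₁ ≠ e₃) (h23 : e₂ ≠ e₃)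
    {x₁ x₂ : V} (hx1 : x₁ ∈ X) (hx2 : x₂ ∈ X) (h1 : x₁ ∈ ends e₁) (h2 : x₂ ∈ ends e₂)
    (hm : X.card % 5 = 2) :
    ∃ F g, TF ends F ∧ e₁ ∈ F ∧ e₂ ∈ F ∧ e₃ ∉ F ∧ g ∈ F ∧ ends g = s(x₁, x₂) := by
  obtain ⟨F, hF, he1, he2, he3, hx2C, hmod, hlt⟩ := cut_count G hX h12 h13 h23 hx1 hx2 h1 h2
  have c1 : e₁ ∈ cut ends X := by simp [hX]
  have c2 : e₂ ∈ cut ends X := by simp [hX]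
  set C := comp ends F x₁ with hC
  have hxC : x₁ ∈ C := self_mem_comp _ _ _
  have hcard : (C ∩ X).card = 2 := by omega
  have hin : ∀ e ∈ F, e ≠ e₁ → e ≠ e₂ → ∀ a b, ends e = s(a, b) → a ∈ C ∩ X → b ∈ C ∩ X := by
    intro e he hn1 hn2 a b hab ha
    rw [mem_inter] at ha ⊢
    refine ⟨comp_step he hab ha.1, ?_⟩
    by_contra hb
    have : e ∈ cut ends X := mem_cut.2 ⟨a, ha.2, b, hb, hab⟩
    rw [hX] at this
    simp only [mem_insert, mem_singleton] at this
    rcases this with rfl | rfl | rfl <;> contradiction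
  obtain ⟨p, hp, hpn⟩ := Finset.exists_mem_ne (by omega : 1 < (C ∩ X).card) x₁
  have hpair : C ∩ X = {x₁, p} := by
    symm
    refine Finset.eq_of_subset_of_card_le ?_ ?_
    · intro x hx
      simp only [mem_insert, mem_singleton] at hx
      rcases hx with rfl | rfl
      · simp [hxC, hx1]
      · exact hp
    · rw [hcard, Finset.card_pair hpn.symm]
  have hx1in : x₁ ∈ C ∩ X := by simp [hxC, hx1]
  have hne : x₁ ≠ x₂ := by
    rintro rfl
    have hpX := (mem_inter.1 hp).2
    have hP : ∀ g ∈ F, p ∈ ends g → ends g = s(p, x₁) := by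
      intro g hg hpg
      obtain ⟨q, hq, hqn⟩ := other_end G.hl hpg
      have := hin g hg ?_ ?_ p q hq hp
      · rw [hpair] at this
        simp only [mem_insert, mem_singleton] at this
        rcases this with rfl | rfl
        · exact hq
        · exact absurd rfl hqn
      · rintro rfl
        exact hpn (cut_end_unique c1 hpX hx1 hpg h1)
      · rintro rfl
        exact hpn (cut_end_unique c2 hpX hx1 hpg h2)
    obtain ⟨g, hg, -, hpg⟩ := ex_other hF p e₁
    obtain ⟨g', hg', hne, hpg'⟩ := ex_other hF p g
    exact hne (ends_inj G (by rw [hP g hg hpg, hP g' hg' hpg']))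
  have hx2p : x₂ = p := by
    have : x₂ ∈ C ∩ X := by simp [hx2C, hx2]
    rw [hpair] at this
    simp only [mem_insert, mem_singleton] at this
    exact this.resolve_left hne.symm
  obtain ⟨g, hg, hgn, hxg⟩ := ex_other hF x₁ e₁
  have hgn2 : g ≠ e₂ := by
    rintro rfl
    exact hne (cut_end_unique c2 hx1 hx2 hxg h2)
  obtain ⟨q, hq, hqn⟩ := other_end G.hl hxg
  have := hin g hg hgn hgn2 _ _ hq hx1in
  rw [hpair] at this
  simp only [mem_insert, mem_singleton] at this
  have hqp : q = p := this.resolve_left hqn.symm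
  exact ⟨F, g, hF, he1, he2, he3, hg, by rw [hq, hqp, hx2p]⟩

lemma cut_half {ends : E → Sym2 V} (G : Good ends) {X : Finset V}
    (hX : (cut ends X).card = 3) : X.card % 5 ≠ 0 ∧ X.card % 5 ≠ 2 ∧ (X.card % 5 = 1 → X.card = 1) := by
  obtain ⟨e₁, e₂, e₃, h12, h13, h23, hX⟩ := Finset.card_eq_three.1 hX
  have hX2 : cut ends X = {e₁, e₃, e₂} := by rw [hX]; ext; simp; tauto
  have hX3 : cut ends X = {e₂, e₃, e₁} := by rw [hX]; ext; simp; tauto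
  have hex : ∀ e ∈ cut ends X, ∃ x ∈ X, x ∈ ends e := by
    intro e he
    obtain ⟨a, ha, b, -, hab⟩ := mem_cut.1 he
    exact ⟨a, ha, by rw [hab]; simp⟩
  obtain ⟨x₁, hx1, h1⟩ := hex e₁ (by simp [hX])
  obtain ⟨x₂, hx2, h2⟩ := hex e₂ (by simp [hX])
  obtain ⟨x₃, hx3, h3⟩ := hex e₃ (by simp [hX])
  refine ⟨?_, ?_, ?_⟩
  · intro hm
    obtain ⟨F, hF, -, -, -, -, hmod, hlt⟩ := cut_count G hX h12 h13 h23 hx1 hx2 h1 h2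
    have : 0 < (comp ends F x₁ ∩ X).card := Finset.card_pos.2 ⟨x₁, by simp [hx1, self_mem_comp]⟩
    omega
  · intro hm
    obtain ⟨F, g, hF, he1, he2, he3, hg, hgx⟩ := cut_two G hX h12 h13 h23 hx1 hx2 h1 h2 hm
    obtain ⟨-, g', -, -, -, -, -, hgx'⟩ := cut_two G hX2 h13 h12 h23.symm hx1 hx3 h1 h3 hm
    obtain ⟨-, g'', -, -, -, -, -, hgx''⟩ :=
      cut_two G hX3 h23 h12.symm h13.symm hx2 hx3 h2 h3 hm
    have n12 : x₁ ≠ x₂ := by rintro rfl; exact G.hl g (by rw [hgx]; simp)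
    have n13 : x₁ ≠ x₃ := by rintro rfl; exact G.hl g' (by rw [hgx']; simp)
    have n23 : x₂ ≠ x₃ := by rintro rfl; exact G.hl g'' (by rw [hgx'']; simp)
    have hcutno : ∀ f a b, a ∈ X → b ∈ X → a ≠ b → ends f = s(a, b) → f ∉ cut ends X := by
      intro f a b ha hb hab hf hfc
      exact hab (cut_end_unique hfc ha hb (by rw [hf]; simp) (by rw [hf]; simp))
    have hg3 : g' ≠ e₃ := by
      rintro rfl
      exact hcutno g' _ _ hx1 hx3 n13 hgx' (by simp [hX])
    have hg31 : g' ≠ e₁ := by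
      rintro rfl
      exact hcutno g' _ _ hx1 hx3 n13 hgx' (by simp [hX])
    have hg4 : g'' ≠ e₃ := by
      rintro rfl
      exact hcutno g'' _ _ hx2 hx3 n23 hgx'' (by simp [hX])
    have hg1 : g ≠ e₁ := by
      rintro rfl
      exact hcutno g _ _ hx1 hx2 n12 hgx (by simp [hX])
    have hgg : g' ≠ g'' := by
      rintro rfl
      rw [hgx'] at hgx''
      rcases Sym2.eq_iff.1 hgx'' with ⟨h, -⟩ | ⟨h, -⟩ <;> contradiction
    have hgg2 : g' ≠ g := by
      rintro rfl
      rw [hgx'] at hgx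
      rcases Sym2.eq_iff.1 hgx with ⟨-, h⟩ | ⟨h, -⟩
      · exact n23 h.symm
      · contradiction
    have hg'F : g' ∈ F := by
      by_contra hno
      obtain ⟨p, hp, hpn, hpx⟩ := ex_other hF x₃ g''
      rcases inc_three G.hc hg3 hgg hg4.symm (v := x₃) (h := p) (by rw [hgx']; simp) h3
        (by rw [hgx'']; simp) hpx with rfl | rfl | rfl <;> contradiction
    rcases inc_two hF he1 hg hg'F hg1.symm h1 (by rw [hgx]; simp) (by rw [hgx']; simp) with h | h
    · exact hg31 h
    · exact hgg2 h
  · intro hm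
    have heq : ∀ {a b c : E} (_ : cut ends X = {a, b, c}) (_ : a ≠ b) (_ : a ≠ c) (_ : b ≠ c)
        {x y : V} (_ : x ∈ X) (_ : y ∈ X) (_ : x ∈ ends a) (_ : y ∈ ends b), x = y := by
      intro a b c hX h12 h13 h23 x y hx hy hxa hyb
      obtain ⟨F, hF, -, -, -, hyC, hmod, hlt⟩ := cut_count G hX h12 h13 h23 hx hy hxa hyb
      have : (comp ends F x ∩ X).card ≤ 1 := by omega
      exact Finset.card_le_one.1 this x (by simp [hx, self_mem_comp]) y (by simp [hy, hyC])
    obtain rfl := heq hX h12 h13 h23 hx1 hx2 h1 h2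
    obtain rfl := heq hX2 h13 h12 h23.symm hx1 hx3 h1 h3
    have hcx : ∀ e ∈ cut ends X, x₁ ∈ ends e := by
      intro e he
      rw [hX] at he
      simp only [mem_insert, mem_singleton] at he
      rcases he with rfl | rfl | rfl <;> assumption
    have hemp : cut ends (X.erase x₁) = ∅ := by
      rw [Finset.eq_empty_iff_forall_notMem]
      intro e he
      obtain ⟨a, ha, b, hb, hab⟩ := mem_cut.1 he
      rw [mem_erase] at ha hb
      have hae : a ∈ ends e := by rw [hab]; simp
      have hec : e ∈ cut ends X := by
        by_cases hbx : b = x₁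
        · subst hbx
          rw [hX]
          simpa using inc_three G.hc h12 h13 h23 h1 h2 h3 (h := e) (by rw [hab]; simp)
        · exact mem_cut.2 ⟨a, ha.2, b, fun h => hb ⟨hbx, h⟩, hab⟩
      exact ha.1 (cut_end_unique hec ha.2 hx1 hae (hcx e hec))
    by_contra hne
    have hpos : (X.erase x₁).Nonempty := by
      rw [← Finset.card_pos, Finset.card_erase_of_mem hx1]
      have := Finset.card_pos.2 ⟨x₁, hx1⟩
      omega
    have := cut_nonempty G.hconn hemp hpos x₁
    simp at this

lemma three_cut {ends : E → Sym2 V} (G : Good ends) {X : Finset V}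
    (hX : (cut ends X).card = 3) : X.card = 1 ∨ Xᶜ.card = 1 := by
  have h1 := cut_half G hX
  have h2 := cut_half G (X := Xᶜ) (by rw [cut_compl, hX])
  obtain ⟨e, he⟩ := Finset.card_pos.1 (by omega : 0 < (cut ends X).card)
  obtain ⟨F, -, -, hF⟩ := two_factor_pair G.hl G.hc G.hb e e
  have h5 := closed_five G hF _ (univ : Finset V) rfl (by simp)
  rw [Finset.card_univ] at h5
  have := Finset.card_add_card_compl X
  by_cases h : X.card % 5 = 1
  · exact Or.inl (h1.2.2 h)
  · exact Or.inr (h2.2.2 (by omega))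

lemma mem_cut_singleton {ends : E → Sym2 V} (hl : Mg.NoLoops ends) {v : V} {e : E} :
    e ∈ cut ends {v} ↔ v ∈ ends e := by
  rw [mem_cut]
  constructor
  · rintro ⟨a, ha, b, -, h⟩
    rw [mem_singleton] at ha
    rw [h, ha]; simp
  · intro h
    obtain ⟨b, hb, hne⟩ := other_end hl h
    exact ⟨v, by simp, b, by simpa using hne.symm, hb⟩

lemma path_three {ends : E → Sym2 V} (G : Good ends) {u v w x : V} {e₁ e₂ e₃ : E}
    (h1 : ends e₁ = s(u, v)) (h2 : ends e₂ = s(v, w)) (h3 : ends e₃ = s(w, x)) (huw : u ≠ w)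
    (h23 : e₂ ≠ e₃) : ∃ F, TF ends F ∧ e₁ ∈ F ∧ e₂ ∈ F ∧ e₃ ∈ F := by
  rcases tutte_alt G.hl G.hc {e₁, e₂, e₃} with ⟨F, hD, hF⟩ | ⟨S, P, hk, hodd, hdS, hdP, hcl⟩
  · exact ⟨F, hF, hD (by simp), hD (by simp), hD (by simp)⟩
  set D : Finset E := {e₁, e₂, e₃} with hD
  have hDc : D.card ≤ 3 := Finset.card_le_three
  have hpt := fun e => barrier_pt G.hl hdS hdP hcl e
  have hge := fun O hO => cut_ge_three G.hl G.hc G.hb (hodd O hO)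
  have s1 := Finset.sum_le_sum (s := univ) (fun e _ => hpt e)
  have s2 := Finset.sum_le_sum hge
  have s1' := s1
  have s2' := s2
  rw [barrier_sum G.hc, ← barrier_dc] at s1'
  rw [Finset.sum_const, smul_eq_mul] at s2'
  have eq1 : ∀ e, (P.filter (fun O => e ∈ cut ends O)).card = cnt ends S e + if e ∈ D then 2 else 0 := by
    have := (Finset.sum_eq_sum_iff_of_le (s := univ) (fun e _ => hpt e)).1 (by
      rw [barrier_sum G.hc, ← barrier_dc]; omega)
    exact fun e => this e (mem_univ e)
  have eq2 : ∀ O ∈ P, 3 = (cut ends O).card :=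
    (Finset.sum_eq_sum_iff_of_le hge).1 (by rw [Finset.sum_const, smul_eq_mul]; omega)
  have nuv : u ≠ v := by rintro rfl; exact G.hl e₁ (by rw [h1]; simp)
  have nvw : v ≠ w := by rintro rfl; exact G.hl e₂ (by rw [h2]; simp)
  have nvx : v ≠ x := by
    rintro rfl
    exact h23 (ends_inj G (by rw [h2, h3, Sym2.eq_swap]))
  have hone : ∀ O ∈ P, O.card = 1 := by
    intro O hO
    refine (three_cut G (eq2 O hO).symm).resolve_right fun hc1 => ?_
    obtain ⟨t, ht⟩ := Finset.card_eq_one.1 hc1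
    have hin : ∀ y, y ≠ t → y ∈ O := by
      intro y hy
      by_contra hyO
      have : y ∈ Oᶜ := by simpa using hyO
      rw [ht] at this
      exact hy (by simpa using this)
    have key : ∀ e ∈ D, t ∈ ends e := by
      intro e he
      have h := eq1 e
      rw [if_pos he] at h
      obtain ⟨O', hO'⟩ := Finset.card_pos.1 (by omega : 0 < (P.filter (fun O => e ∈ cut ends O)).card)
      rw [mem_filter] at hO'
      obtain ⟨a, ha, b, hb, hab⟩ := mem_cut.1 hO'.2
      by_contra hte
      rw [hab, Sym2.mem_iff] at hte
      push Not at hte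
      have haO := hin a hte.1.symm
      have hbO := hin b hte.2.symm
      rw [hdP O hO O' hO'.1 a haO ha] at hbO
      exact hb hbO
    have k1 := key e₁ (by simp [hD])
    have k2 := key e₂ (by simp [hD])
    have k3 := key e₃ (by simp [hD])
    rw [h1, Sym2.mem_iff] at k1
    rw [h2, Sym2.mem_iff] at k2
    rw [h3, Sym2.mem_iff] at k3
    rcases k1 with rfl | rfl
    · rcases k2 with h | h <;> contradiction
    · rcases k3 with h | h <;> contradiction
  let I : Finset V := univ.filter (fun y => ({y} : Finset V) ∈ P)
  have hmI : ∀ y, y ∈ I ↔ ({y} : Finset V) ∈ P := by intro y; simp [I]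
  have eq3 : ∀ e, cnt ends I e = cnt ends S e + if e ∈ D then 2 else 0 := by
    intro e
    rw [← eq1 e, cnt, ← Finset.card_image_of_injective _ (Finset.singleton_injective (α := V))]
    congr 1
    ext O
    simp only [mem_image, mem_filter, hmI]
    constructor
    · rintro ⟨y, ⟨hy, hye⟩, rfl⟩
      exact ⟨hy, (mem_cut_singleton G.hl).2 hye⟩
    · rintro ⟨hO, hOe⟩
      obtain ⟨y, rfl⟩ := Finset.card_eq_one.1 (hone O hO)
      exact ⟨y, ⟨hO, (mem_cut_singleton G.hl).1 hOe⟩, rfl⟩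
  have hIS : ∀ y, y ∈ I → y ∉ S := by
    intro y hy hyS
    exact Finset.disjoint_left.1 (hdS _ ((hmI y).1 hy)) (mem_singleton_self y) hyS
  have hall : ∀ y, y ∈ I ∪ S := by
    have hne : (I ∪ S).Nonempty := by
      obtain ⟨O, hO⟩ := Finset.card_pos.1 (by omega : 0 < P.card)
      obtain ⟨y, rfl⟩ := Finset.card_eq_one.1 (hone O hO)
      exact ⟨y, mem_union_left _ ((hmI y).2 hO)⟩
    refine cut_nonempty G.hconn ?_ hne
    rw [Finset.eq_empty_iff_forall_notMem]
    intro e he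
    obtain ⟨a, ha, b, hb, hab⟩ := mem_cut.1 he
    have hn : a ≠ b := by rintro rfl; exact hb ha
    have h := eq3 e
    rw [cnt_eq I hab hn, cnt_eq S hab hn] at h
    rw [mem_union] at ha hb
    push Not at hb
    simp only [hb.1, hb.2, if_false] at h
    rcases ha with ha | ha
    · simp only [ha, hIS a ha, if_true, if_false] at h
      split_ifs at h <;> omega
    · have : a ∉ I := fun h' => hIS a h' ha
      simp only [ha, this, if_true, if_false] at h
      split_ifs at h <;> omega
  obtain ⟨F, he1, he2, hF⟩ := two_factor_pair G.hl G.hc G.hb e₁ e₂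
  refine ⟨F, hF, he1, he2, ?_⟩
  by_contra he3
  have hV5 : comp ends F v = univ := by
    rw [Finset.eq_univ_iff_forall]
    intro z
    by_contra hz
    set K := comp ends F z with hK
    have hvK : v ∉ K := fun h => hz (mem_comp.2 (reach_symm (mem_comp.1 h)))
    have hsum : ∑ y ∈ K ∩ I, (inc ends F y).card = ∑ y ∈ K ∩ S, (inc ends F y).card := by
      rw [sum_deg, sum_deg]
      refine Finset.sum_congr rfl fun e he => ?_
      obtain ⟨a, b, hab, hn⟩ := ex_ends G.hl e
      rw [cnt_eq _ hab hn, cnt_eq _ hab hn]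
      have hiff : a ∈ K ↔ b ∈ K :=
        ⟨comp_step he hab, comp_step he (by rw [hab, Sym2.eq_swap])⟩
      by_cases haK : a ∈ K
      · have hbK := hiff.1 haK
        have heD : e ∉ D := by
          intro heD
          have hve : ¬ v ∈ ends e := by
            rw [hab, Sym2.mem_iff]
            rintro (rfl | rfl) <;> contradiction
          simp only [hD, mem_insert, mem_singleton] at heD
          rcases heD with rfl | rfl | rfl
          · exact hve (by rw [h1]; simp)
          · exact hve (by rw [h2]; simp)
          · exact he3 he
        have h := eq3 e
        rw [cnt_eq _ hab hn, cnt_eq _ hab hn, if_neg heD] at h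
        simpa [mem_inter, haK, hbK] using h
      · have hbK : b ∉ K := fun h => haK (hiff.2 h)
        simp [haK, hbK]
    rw [Finset.sum_congr rfl (fun y _ => hF y), Finset.sum_congr rfl (fun y _ => hF y)] at hsum
    simp only [Finset.sum_const, smul_eq_mul] at hsum
    have hKc : K.card = (K ∩ I).card + (K ∩ S).card := by
      rw [← Finset.card_union_of_disjoint, ← Finset.inter_union_distrib_left]
      · congr 1
        rw [eq_comm, Finset.inter_eq_left]
        exact fun y _ => hall y
      · rw [Finset.disjoint_left]
        intro y hy hy'
        exact hIS y (mem_inter.1 hy).2 (mem_inter.1 hy').2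
    rw [comp_card G hF] at hKc
    omega
  have h5 := comp_card G hF v
  rw [hV5, Finset.card_univ] at h5
  have := even_V G.hl G.hc
  omega

lemma card_five {u v w x y : V} (h1 : u ≠ v) (h2 : u ≠ w) (h3 : u ≠ x) (h4 : u ≠ y) (h5 : v ≠ w)
    (h6 : v ≠ x) (h7 : v ≠ y) (h8 : w ≠ x) (h9 : w ≠ y) (h10 : x ≠ y) :
    ({u, v, w, x, y} : Finset V).card = 5 := by
  rw [Finset.card_insert_of_notMem, Finset.card_insert_of_notMem, Finset.card_insert_of_notMem,
    Finset.card_pair h10] <;> simp [h1, h2, h3, h4, h5, h6, h7, h8, h9]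

lemma inj_five {u v w x y : V} (h1 : u ≠ v) (h2 : u ≠ w) (h3 : u ≠ x) (h4 : u ≠ y) (h5 : v ≠ w)
    (h6 : v ≠ x) (h7 : v ≠ y) (h8 : w ≠ x) (h9 : w ≠ y) (h10 : x ≠ y) :
    Function.Injective (![u, v, w, x, y] : Fin 5 → V) := by
  intro i j hij
  fin_cases i <;> fin_cases j <;>
    first
    | rfl
    | (exfalso; revert hij
       simp [h1, h2, h3, h4, h5, h6, h7, h8, h9, h10, h1.symm, h2.symm, h3.symm, h4.symm,
        h5.symm, h6.symm, h7.symm, h8.symm, h9.symm, h10.symm])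

lemma five_cycle {ends : E → Sym2 V} (G : Good ends) {u v w x : V} {e₁ e₂ e₃ : E}
    (h1 : ends e₁ = s(u, v)) (h2 : ends e₂ = s(v, w)) (h3 : ends e₃ = s(w, x)) (huw : u ≠ w)
    (h23 : e₂ ≠ e₃) : ∃ (c : ZMod 5 → V) (f : ZMod 5 → E),
      (Function.Injective c ∧ Function.Injective f ∧ ∀ i, ends (f i) = s(c i, c (i + 1))) ∧
      e₁ ∈ Set.range f ∧ e₂ ∈ Set.range f ∧ e₃ ∈ Set.range f ∧
      ∀ g ∈ Set.range f, w ∈ ends g → g = e₂ ∨ g = e₃ := by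
  obtain ⟨F, hF, he1, he2, he3⟩ := path_three G h1 h2 h3 huw h23
  have nuv : u ≠ v := by rintro rfl; exact G.hl e₁ (by rw [h1]; simp)
  have nvw : v ≠ w := by rintro rfl; exact G.hl e₂ (by rw [h2]; simp)
  have nwx : w ≠ x := by rintro rfl; exact G.hl e₃ (by rw [h3]; simp)
  have nvx : v ≠ x := by
    rintro rfl
    exact h23 (ends_inj G (by rw [h2, h3, Sym2.eq_swap]))
  have h12 : e₁ ≠ e₂ := by
    rintro rfl
    rw [h1] at h2
    rcases Sym2.eq_iff.1 h2 with ⟨h, -⟩ | ⟨h, -⟩ <;> contradiction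
  have atv : ∀ g ∈ F, v ∈ ends g → g = e₁ ∨ g = e₂ := fun g hg hv =>
    inc_two hF he1 he2 hg h12 (by rw [h1]; simp) (by rw [h2]; simp) hv
  have atw : ∀ g ∈ F, w ∈ ends g → g = e₂ ∨ g = e₃ := fun g hg hv =>
    inc_two hF he2 he3 hg h23 (by rw [h2]; simp) (by rw [h3]; simp) hv
  have small : ∀ Z : Finset V, v ∈ Z → Z.card ≤ 4 →
      (∀ a ∈ Z, ∀ g ∈ F, a ∈ ends g → ∀ b ∈ ends g, b ∈ Z) → False := by
    intro Z hv hZ hcl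
    have := Finset.card_le_card (comp_subset (ends := ends) (F := F) (Z := Z) (fun e he a b hab ha =>
      hcl a ha e he (by rw [hab]; simp) b (by rw [hab]; simp)) hv)
    rw [comp_card G hF] at this
    omega
  have nux : u ≠ x := by
    rintro rfl
    have h13 : e₁ ≠ e₃ := by
      rintro rfl
      rw [h1] at h3
      rcases Sym2.eq_iff.1 h3 with ⟨h, -⟩ | ⟨-, h⟩ <;> contradiction
    have atu : ∀ g ∈ F, u ∈ ends g → g = e₁ ∨ g = e₃ := fun g hg hv =>
      inc_two hF he1 he3 hg h13 (by rw [h1]; simp) (by rw [h3]; simp) hv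
    refine small {u, v, w} (by simp) (by have := Finset.card_le_three (a := u) (b := v) (c := w); omega) ?_
    intro a ha g hg hag b hb
    simp only [mem_insert, mem_singleton] at ha ⊢
    have : g = e₁ ∨ g = e₂ ∨ g = e₃ := by
      rcases ha with rfl | rfl | rfl
      · rcases atu g hg hag with h | h <;> simp [h]
      · rcases atv g hg hag with h | h <;> simp [h]
      · rcases atw g hg hag with h | h <;> simp [h]
    rcases this with rfl | rfl | rfl
    · rw [h1, Sym2.mem_iff] at hb; rcases hb with h | h <;> simp [h]
    · rw [h2, Sym2.mem_iff] at hb; rcases hb with h | h <;> simp [h]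
    · rw [h3, Sym2.mem_iff] at hb; rcases hb with h | h <;> simp [h]
  obtain ⟨p, hp, hpn, hup⟩ := ex_other hF u e₁
  obtain ⟨y, hy, nuy⟩ := other_end G.hl hup
  obtain ⟨q, hq, hqn, hxq⟩ := ex_other hF x e₃
  obtain ⟨z, hz, nxz⟩ := other_end G.hl hxq
  have atu : ∀ g ∈ F, u ∈ ends g → g = e₁ ∨ g = p := fun g hg hv =>
    inc_two hF he1 hp hg hpn.symm (by rw [h1]; simp) hup hv
  have atx : ∀ g ∈ F, x ∈ ends g → g = e₃ ∨ g = q := fun g hg hv =>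
    inc_two hF he3 hq hg hqn.symm (by rw [h3]; simp) hxq hv
  have hu2 : u ∉ ends e₂ := by rw [h2, Sym2.mem_iff]; tauto
  have hu3 : u ∉ ends e₃ := by rw [h3, Sym2.mem_iff]; tauto
  have hx1 : x ∉ ends e₁ := by rw [h1, Sym2.mem_iff]; rintro (h | h) <;> exact absurd h.symm (by assumption)
  have hx2 : x ∉ ends e₂ := by rw [h2, Sym2.mem_iff]; rintro (h | h) <;> exact absurd h.symm (by assumption)
  have hyp : y ∈ ends p := by rw [hy]; simp
  have hzq : z ∈ ends q := by rw [hz]; simp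
  have nyv : y ≠ v := by
    rintro rfl
    rcases atv p hp hyp with rfl | rfl <;> contradiction
  have nyw : y ≠ w := by
    rintro rfl
    rcases atw p hp hyp with rfl | rfl <;> contradiction
  have nzv : z ≠ v := by
    rintro rfl
    rcases atv q hq hzq with rfl | rfl <;> contradiction
  have nzw : z ≠ w := by
    rintro rfl
    rcases atw q hq hzq with rfl | rfl <;> contradiction
  have nyx : y ≠ x := by
    rintro rfl
    have hpq : p = q := (atx p hp hyp).resolve_left (by rintro rfl; contradiction)
    refine small {u, v, w, y} (by simp) Finset.card_le_four ?_
    intro a ha g hg hag b hb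
    simp only [mem_insert, mem_singleton] at ha ⊢
    have : g = e₁ ∨ g = e₂ ∨ g = e₃ ∨ g = p := by
      rcases ha with rfl | rfl | rfl | rfl
      · rcases atu g hg hag with h | h <;> simp [h]
      · rcases atv g hg hag with h | h <;> simp [h]
      · rcases atw g hg hag with h | h <;> simp [h]
      · rcases atx g hg hag with h | h <;> simp [h, hpq]
    rcases this with rfl | rfl | rfl | rfl
    · rw [h1, Sym2.mem_iff] at hb; rcases hb with h | h <;> simp [h]
    · rw [h2, Sym2.mem_iff] at hb; rcases hb with h | h <;> simp [h]
    · rw [h3, Sym2.mem_iff] at hb; rcases hb with h | h <;> simp [h]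
    · rw [hy, Sym2.mem_iff] at hb; rcases hb with h | h <;> simp [h]
  have nzu : z ≠ u := by
    rintro rfl
    rcases atu q hq hzq with rfl | rfl
    · contradiction
    · rw [hy, Sym2.mem_iff] at hxq
      rcases hxq with h | h
      · exact nux h.symm
      · exact nyx h.symm
  have hv : v ∈ comp ends F v := self_mem_comp _ _ _
  have hu : u ∈ comp ends F v := comp_step he1 (by rw [h1, Sym2.eq_swap]) hv
  have hw : w ∈ comp ends F v := comp_step he2 h2 hv
  have hx : x ∈ comp ends F v := comp_step he3 h3 hw
  have hyC : y ∈ comp ends F v := comp_step hp hy hu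
  have hzC : z ∈ comp ends F v := comp_step hq hz hx
  have hcard := card_five nuv huw nux nuy nvw nvx nyv.symm nwx nyw.symm nyx.symm
  have hCeq : ({u, v, w, x, y} : Finset V) = comp ends F v := by
    refine Finset.eq_of_subset_of_card_le ?_ (by rw [hcard, comp_card G hF])
    intro t ht
    simp only [mem_insert, mem_singleton] at ht
    rcases ht with rfl | rfl | rfl | rfl | rfl <;> assumption
  have hzy : z = y := by
    rw [← hCeq] at hzC
    simp only [mem_insert, mem_singleton] at hzC
    rcases hzC with h | h | h | h | h
    · contradiction
    · contradiction
    · contradiction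
    · exact absurd h.symm nxz
    · exact h
  subst hzy
  have hcinj := inj_five nuv huw nux nuy nvw nvx nyv.symm nwx nyw.symm nyx.symm
  have hadj : ∀ i : Fin 5, ends ((![e₁, e₂, e₃, q, p] : Fin 5 → E) i) =
      s((![u, v, w, x, z] : Fin 5 → V) i, (![u, v, w, x, z] : Fin 5 → V) (i + 1)) := by
    intro i
    fin_cases i
    · exact h1
    · exact h2
    · exact h3
    · exact hz
    · exact hy.trans Sym2.eq_swap
  have hFr : ∀ i : Fin 5, (![e₁, e₂, e₃, q, p] : Fin 5 → E) i ∈ F := by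
    intro i
    fin_cases i <;> assumption
  refine ⟨(![u, v, w, x, z] : Fin 5 → V), (![e₁, e₂, e₃, q, p] : Fin 5 → E),
    ⟨hcinj, ?_, hadj⟩, ⟨(0 : Fin 5), rfl⟩, ⟨(1 : Fin 5), rfl⟩, ⟨(2 : Fin 5), rfl⟩, ?_⟩
  · intro i j hij
    have hi := hadj i
    have hj := hadj j
    rw [hij] at hi
    have hh := hi.symm.trans hj
    rcases Sym2.eq_iff.1 hh with ⟨h, -⟩ | ⟨h, h'⟩
    · exact hcinj h
    · have a1 := hcinj h
      have a2 := hcinj h'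
      exact (zmod_five i j a1 a2).elim
  · rintro g ⟨i, rfl⟩ hg
    exact atw _ (hFr i) hg

end Pet

theorem stmt12 {V E : Type} [Fintype V] [Fintype E] (ends : E → Sym2 V)
    (hl : Mg.NoLoops ends) (hc : Mg.IsCubic ends) (hb : Mg.Bridgeless ends)
    (hconn : Mg.Connected ends) (h5 : Mg.TwoFactorsAllC5 ends) :
    ∀ (u v w : V) (e₁ e₂ : E),
      ends e₁ = s(u, v) → ends e₂ = s(v, w) → u ≠ w →
      ∃ (c c' : ZMod 5 → V) (f f' : ZMod 5 → E),
        (Function.Injective c ∧ Function.Injective f ∧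
          ∀ i, ends (f i) = s(c i, c (i + 1))) ∧
        (Function.Injective c' ∧ Function.Injective f' ∧
          ∀ i, ends (f' i) = s(c' i, c' (i + 1))) ∧
        e₁ ∈ Set.range f ∧ e₂ ∈ Set.range f ∧
        e₁ ∈ Set.range f' ∧ e₂ ∈ Set.range f' ∧
        Set.range f ≠ Set.range f' := by
  classical
  intro u v w e₁ e₂ h1 h2 huw
  have G : Pet.Good ends := ⟨hl, hc, hb, hconn, h5⟩
  have hw2 : w ∈ ends e₂ := by rw [h2]; simp
  have hmem : e₂ ∈ Pet.inc ends Finset.univ w := Pet.mem_inc.2 ⟨Finset.mem_univ _, hw2⟩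
  have hcard : ((Pet.inc ends Finset.univ w).erase e₂).card = 2 := by
    rw [Finset.card_erase_of_mem hmem, Pet.cubic_card hc]
  obtain ⟨g, g', hgg, hset⟩ := Finset.card_eq_two.1 hcard
  have hg : g ∈ (Pet.inc ends Finset.univ w).erase e₂ := by rw [hset]; simp
  have hg' : g' ∈ (Pet.inc ends Finset.univ w).erase e₂ := by rw [hset]; simp
  rw [Finset.mem_erase, Pet.mem_inc] at hg hg'
  obtain ⟨x, hx, -⟩ := Pet.other_end hl hg.2.2
  obtain ⟨x', hx', -⟩ := Pet.other_end hl hg'.2.2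
  obtain ⟨c, f, hcyc, m1, m2, m3, -⟩ := Pet.five_cycle G h1 h2 hx huw hg.1.symm
  obtain ⟨c', f', hcyc', m1', m2', -, hat⟩ := Pet.five_cycle G h1 h2 hx' huw hg'.1.symm
  refine ⟨c, c', f, f', hcyc, hcyc', m1, m2, m1', m2', fun heq => ?_⟩
  rw [heq] at m3
  rcases hat g m3 hg.2.2 with h | h
  · exact hg.1 h
  · exact hgg h
end
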